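/- There exists a constant c_p > 0 depending only on p such that if ψ̂(0) ≥ c_p·‖ψ‖₂, then there exist constants a₀, a₁ > 0 and t₀ ∈ (0,T) such that for all t ∈ (t₀, T): ((p+1)/p)^{1/(p+1)}·k̂(0,t) ≤ [(T−t) − a₀·(T−t)^{1 + (6p−2)/(p+1)}]^{−1/(p+1)} and ((p+1)/p)^{1/(p+1)}·k̂(0,t) ≥ [(T−t) + a₁·(T−t)^{1 + (6p−2)/(p+1)}]^{−1/(p+1)}. -/

import Mathlib

open Real MeasureTheory Filter Set

/-- The `n`-th Fourier coefficient of a `2π`-periodic function `f : ℝ → ℝ`: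
`f̂(n) = (1/2π) ∫₀^{2π} f(θ) e^{-inθ} dθ`. -/
noncomputable def fCoeff (f : ℝ → ℝ) (n : ℤ) : ℂ :=
  (1 / (2 * Real.pi)) * ∫ θ in (0:ℝ)..(2 * Real.pi),
    (f θ : ℂ) * Complex.exp (-(Complex.I * n * θ))

/-- The seminorm `‖f‖₂ = max{sup_n n²|Re f̂(n)|, sup_n n²|Im f̂(n)|}`. -/
noncomputable def seminorm2 (f : ℝ → ℝ) : ℝ :=
  max (⨆ n : ℤ, (n : ℝ)^2 * |(fCoeff f n).re|)
      (⨆ n : ℤ, (n : ℝ)^2 * |(fCoeff f n).im|)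

/-- The `C^l[0,2π]` norm: `max_{0 ≤ j ≤ l} sup_{θ ∈ [0,2π]} |f^{(j)}(θ)|`. -/
noncomputable def ClNorm (l : ℕ) (f : ℝ → ℝ) : ℝ :=
  ⨆ j : Fin (l + 1), ⨆ θ : Set.Icc (0:ℝ) (2 * Real.pi),
    |iteratedDeriv (j : ℕ) f (θ : ℝ)|

/-- `k : ℝ × [0,T) → ℝ` is a smooth, `2π`-periodic (in space), strictly positive solution of the
`p`-curve shortening equation
`∂k/∂t = k²(k^{p-1} ∂²k/∂θ² + (p-1) k^{p-2} (∂k/∂θ)² + (1/p) k^p)`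
with initial datum `ψ` (smooth, strictly positive, `2π`-periodic), blow-up time `T`
(i.e. `sup_θ k(θ,t) → ∞` as `t → T⁻`), such that `k(·,t)` is the curvature of a simple closed
convex curve for each `t`, i.e. `∫₀^{2π} e^{iθ}/k(θ,t) dθ = 0`. -/
def IsPCSF (p : ℕ) (T : ℝ) (k : ℝ → ℝ → ℝ) (ψ : ℝ → ℝ) : Prop :=
  ContDiffOn ℝ (⊤ : ℕ∞) (fun q : ℝ × ℝ => k q.1 q.2) (Set.univ ×ˢ Set.Ico 0 T) ∧
  (∀ θ t, k (θ + 2 * Real.pi) t = k θ t) ∧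
  (∀ θ : ℝ, ∀ t ∈ Set.Ico (0:ℝ) T, 0 < k θ t) ∧
  (∀ θ : ℝ, ∀ t ∈ Set.Ico (0:ℝ) T,
    HasDerivAt (fun s => k θ s)
      ((k θ t)^2 * ((k θ t)^(p - 1) * deriv (deriv (fun x => k x t)) θ
        + ((p : ℝ) - 1) * (k θ t)^(p - 2) * (deriv (fun x => k x t) θ)^2
        + (1 / (p : ℝ)) * (k θ t)^p)) t) ∧
  (∀ θ, k θ 0 = ψ θ) ∧
  ContDiff ℝ (⊤ : ℕ∞) ψ ∧ (∀ θ, 0 < ψ θ) ∧ (∀ θ, ψ (θ + 2 * Real.pi) = ψ θ) ∧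
  Filter.Tendsto (fun t => ⨆ θ : Set.Icc (0:ℝ) (2 * Real.pi), k (θ : ℝ) t)
    (nhdsWithin T (Set.Iio T)) Filter.atTop ∧
  (∀ t ∈ Set.Ico (0:ℝ) T,
    (∫ θ in (0:ℝ)..(2 * Real.pi), Complex.exp (Complex.I * θ) / (k θ t)) = 0)

/-- The original time `t` corresponding to the rescaled time `τ`:
`t = T(1 - e^{-(p+1)τ})`, i.e. `τ = -(1/(p+1))·log(1 - t/T)`. -/
noncomputable def tOf (p : ℕ) (T τ : ℝ) : ℝ := T * (1 - Real.exp (-((p : ℝ) + 1) * τ))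

/-- The normalized curvature `k̃(θ,τ) = ((p+1)/p)^{1/(p+1)} (T-t)^{1/(p+1)} k(θ,t)`,
with `t = T(1 - e^{-(p+1)τ})`. -/
noncomputable def ktilde (p : ℕ) (T : ℝ) (k : ℝ → ℝ → ℝ) (θ τ : ℝ) : ℝ :=
  (((p : ℝ) + 1) / (p : ℝ)) ^ ((1 : ℝ) / ((p : ℝ) + 1))
    * (T - tOf p T τ) ^ ((1 : ℝ) / ((p : ℝ) + 1)) * k θ (tOf p T τ)

open scoped Topology

/-!
Write `r` for the mean of `k` and `E` for the mean of `k'²`. The closing condition says that the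
first Fourier coefficient of `1 / k` vanishes, so the first mode of `k` is quadratically small when
`k` is nearly constant, and Wirtinger's inequality holds with a constant close to `4`. Integrating
by parts, the flow then satisfies `p r' = r ^ (p + 2)` and `p E' ≤ -(6p - 4) r ^ (p + 1) E` up to
small relative errors. Smallness of `E / r²` is therefore preserved, `E r ^ (6p - 4)` stays bounded,
and `(r ^ (-(p + 1)))' = -(p + 1) / p * (1 + O(r ^ (-(6p - 2))))`. Integrating this back from the
blow-up time, where `r ^ (p + 1)` is comparable to `1 / (T - t)`, gives the stated rate.
-/

section UniformAngle

/-- The uniform probability measure on the interval `(0, 2π]` of angles, so that `∫ f ∂uniformAngle`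
is the mean value of a `2π`-periodic function. -/
noncomputable def uniformAngle : Measure ℝ :=
  ProbabilityTheory.cond volume (Ioc 0 (2 * π))

lemma uniformAngle_eq_smul :
    uniformAngle = ENNReal.ofReal (2 * π)⁻¹ • volume.restrict (Ioc 0 (2 * π)) := by
  rw [uniformAngle, ProbabilityTheory.cond, Real.volume_Ioc, sub_zero,
    ENNReal.ofReal_inv_of_pos two_pi_pos]

instance : IsProbabilityMeasure uniformAngle :=
  ProbabilityTheory.cond_isProbabilityMeasure_of_finite
    (by simp [Real.volume_Ioc, pi_pos]) measure_Ioc_lt_top.ne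

lemma integral_uniformAngle {E : Type*} [NormedAddCommGroup E] [NormedSpace ℝ E] (f : ℝ → E) :
    ∫ θ, f θ ∂uniformAngle = (2 * π)⁻¹ • ∫ θ in (0 : ℝ)..(2 * π), f θ := by
  rw [uniformAngle_eq_smul, integral_smul_measure,
    ENNReal.toReal_ofReal (inv_nonneg.2 two_pi_pos.le),
    intervalIntegral.integral_of_le two_pi_pos.le]

lemma ae_uniformAngle_mem_Ioc : ∀ᵐ θ ∂uniformAngle, θ ∈ Ioc 0 (2 * π) :=
  ProbabilityTheory.ae_cond_mem measurableSet_Ioc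

lemma memLp_uniformAngle_of_continuous {E : Type*} [NormedAddCommGroup E]
    [SecondCountableTopology E] {f : ℝ → E} (hf : Continuous f) (q : ENNReal) :
    MemLp f q uniformAngle := by
  obtain ⟨C, hC⟩ := isCompact_Icc.exists_bound_of_continuousOn
    (s := Icc (0 : ℝ) (2 * π)) hf.continuousOn
  refine MemLp.of_bound hf.aestronglyMeasurable C ?_
  filter_upwards [ae_uniformAngle_mem_Ioc] with θ hθ using hC θ (Ioc_subset_Icc_self hθ)

lemma integrable_uniformAngle_of_continuous {E : Type*} [NormedAddCommGroup E]
    [SecondCountableTopology E] {f : ℝ → E} (hf : Continuous f) : Integrable f uniformAngle :=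
  memLp_one_iff_integrable.1 (memLp_uniformAngle_of_continuous hf 1)

lemma integral_uniformAngle_mono {f g : ℝ → ℝ} (hf : Continuous f) (hg : Continuous g)
    (h : ∀ θ, f θ ≤ g θ) : ∫ θ, f θ ∂uniformAngle ≤ ∫ θ, g θ ∂uniformAngle :=
  integral_mono (integrable_uniformAngle_of_continuous hf)
    (integrable_uniformAngle_of_continuous hg) h

lemma integral_uniformAngle_add {E : Type*} [NormedAddCommGroup E] [NormedSpace ℝ E]
    [SecondCountableTopology E] {f g : ℝ → E} (hf : Continuous f) (hg : Continuous g) :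
    ∫ θ, (f θ + g θ) ∂uniformAngle = ∫ θ, f θ ∂uniformAngle + ∫ θ, g θ ∂uniformAngle :=
  integral_add (integrable_uniformAngle_of_continuous hf)
    (integrable_uniformAngle_of_continuous hg)

lemma integral_uniformAngle_pos {f : ℝ → ℝ} (hf : Continuous f) (hpos : ∀ θ, 0 < f θ) :
    0 < ∫ θ, f θ ∂uniformAngle := by
  rw [integral_uniformAngle]
  exact smul_pos (inv_pos.2 two_pi_pos) (intervalIntegral.intervalIntegral_pos_of_pos
    (hf.intervalIntegrable _ _) hpos two_pi_pos)

lemma integral_uniformAngle_eq_zero_of_hasDerivAt {E : Type*} [NormedAddCommGroup E]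
    [NormedSpace ℝ E] [CompleteSpace E] {f f' : ℝ → E} (hf : ∀ θ, HasDerivAt f (f' θ) θ)
    (hf' : Continuous f') (hper : f (2 * π) = f 0) : ∫ θ, f' θ ∂uniformAngle = 0 := by
  rw [integral_uniformAngle, intervalIntegral.integral_eq_sub_of_hasDerivAt (fun θ _ => hf θ)
    (hf'.intervalIntegrable _ _), hper, sub_self, smul_zero]

lemma integral_deriv_eq_zero {f : ℝ → ℝ} (hf : ContDiff ℝ 1 f)
    (hper : Function.Periodic f (2 * π)) : ∫ θ, deriv f θ ∂uniformAngle = 0 :=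
  integral_uniformAngle_eq_zero_of_hasDerivAt
    (fun θ => (hf.differentiable one_ne_zero θ).hasDerivAt) (hf.continuous_deriv le_rfl) hper.eq

lemma integral_deriv_mul {f g : ℝ → ℝ} (hf : ContDiff ℝ 1 f) (hg : ContDiff ℝ 1 g)
    (hfper : Function.Periodic f (2 * π)) (hgper : Function.Periodic g (2 * π)) :
    ∫ θ, deriv f θ * g θ ∂uniformAngle = -∫ θ, f θ * deriv g θ ∂uniformAngle := by
  have := hf.continuous_deriv le_rfl
  have := hg.continuous_deriv le_rfl
  have hparts := integral_uniformAngle_eq_zero_of_hasDerivAt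
    (fun θ => (hf.differentiable one_ne_zero θ).hasDerivAt.mul
      (hg.differentiable one_ne_zero θ).hasDerivAt) (by fun_prop) (by simp [hfper.eq, hgper.eq])
  rw [integral_uniformAngle_add (by fun_prop) (by fun_prop)] at hparts
  exact eq_neg_of_add_eq_zero_left hparts

lemma sq_integral_le_integral_sq {Ω : Type*} [MeasurableSpace Ω] {μ : Measure Ω}
    [IsProbabilityMeasure μ] {f : Ω → ℝ} (hf : MemLp f 2 μ) :
    (∫ ω, f ω ∂μ) ^ 2 ≤ ∫ ω, f ω ^ 2 ∂μ :=
  sub_nonneg.1 (ProbabilityTheory.variance_eq_sub hf ▸ ProbabilityTheory.variance_nonneg f μ)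

/-- The a priori bound `2π ‖f'‖_{L²}` for the oscillation of a `2π`-periodic `C¹` function `f`. -/
noncomputable def oscBound (f : ℝ → ℝ) : ℝ :=
  2 * π * √(∫ θ, deriv f θ ^ 2 ∂uniformAngle)

lemma oscBound_nonneg (f : ℝ → ℝ) : 0 ≤ oscBound f := by unfold oscBound; positivity

lemma oscBound_sq (f : ℝ → ℝ) :
    oscBound f ^ 2 = 4 * π ^ 2 * ∫ θ, deriv f θ ^ 2 ∂uniformAngle := by
  rw [oscBound, mul_pow, sq_sqrt (integral_nonneg fun θ => sq_nonneg _)]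
  ring

lemma abs_sub_le_oscBound {f : ℝ → ℝ} (hf : ContDiff ℝ 1 f) {x y : ℝ} (hx : x ∈ Icc 0 (2 * π))
    (hy : y ∈ Icc 0 (2 * π)) : |f x - f y| ≤ oscBound f := by
  have hf' : Continuous (deriv f) := hf.continuous_deriv le_rfl
  have hmean : ∫ θ in (0 : ℝ)..(2 * π), |deriv f θ| = 2 * π * ∫ θ, |deriv f θ| ∂uniformAngle := by
    rw [integral_uniformAngle, smul_eq_mul, mul_inv_cancel_left₀ two_pi_pos.ne']
  have hcs : ∫ θ, |deriv f θ| ∂uniformAngle ≤ √(∫ θ, deriv f θ ^ 2 ∂uniformAngle) := by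
    refine le_sqrt_of_sq_le ?_
    simpa only [sq_abs] using
      sq_integral_le_integral_sq (memLp_uniformAngle_of_continuous hf'.abs 2)
  have hftc : f x - f y = ∫ θ in y..x, deriv f θ :=
    (intervalIntegral.integral_eq_sub_of_hasDerivAt
      (fun θ _ => (hf.differentiable one_ne_zero θ).hasDerivAt) (hf'.intervalIntegrable _ _)).symm
  calc |f x - f y| ≤ |(∫ θ in y..x, |deriv f θ|)| := by
        rw [hftc]
        exact intervalIntegral.norm_integral_le_abs_integral_norm (f := deriv f)
    _ ≤ |(∫ θ in (0 : ℝ)..(2 * π), |deriv f θ|)| := by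
        refine intervalIntegral.abs_integral_mono_interval ?_
          (Eventually.of_forall fun θ => abs_nonneg _) (hf'.abs.intervalIntegrable _ _)
        rw [uIoc_of_le two_pi_pos.le]
        exact Ioc_subset_Ioc (le_min hy.1 hx.1) (max_le hy.2 hx.2)
    _ = 2 * π * ∫ θ, |deriv f θ| ∂uniformAngle := by
        rw [hmean, abs_of_nonneg (mul_nonneg two_pi_pos.le
          (integral_nonneg fun θ => abs_nonneg _))]
    _ ≤ oscBound f := by unfold oscBound; gcongr

lemma abs_sub_integral_le_oscBound {f : ℝ → ℝ} (hf : ContDiff ℝ 1 f)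
    (hper : Function.Periodic f (2 * π)) (x : ℝ) :
    |f x - ∫ θ, f θ ∂uniformAngle| ≤ oscBound f := by
  obtain ⟨y, hy, hxy⟩ := hper.exists_mem_Ico₀ two_pi_pos x
  have hmean : f x - ∫ θ, f θ ∂uniformAngle = ∫ θ, (f y - f θ) ∂uniformAngle := by
    rw [integral_sub (integrable_const _) (integrable_uniformAngle_of_continuous hf.continuous),
      integral_const, probReal_univ, one_smul, hxy]
  rw [hmean, ← norm_eq_abs]
  refine (norm_integral_le_of_norm_le_const (μ := uniformAngle) (C := oscBound f) ?_).trans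
    (by rw [probReal_univ, mul_one])
  filter_upwards [ae_uniformAngle_mem_Ioc] with θ hθ
  exact abs_sub_le_oscBound hf (Ico_subset_Icc_self hy) (Ioc_subset_Icc_self hθ)

end UniformAngle

section FourierCoefficients

variable {f g : ℝ → ℝ} {n : ℤ}

lemma fCoeff_eq_integral (f : ℝ → ℝ) (n : ℤ) :
    fCoeff f n = ∫ θ, (f θ : ℂ) * Complex.exp (-(Complex.I * n * θ)) ∂uniformAngle := by
  rw [integral_uniformAngle, fCoeff, Complex.real_smul]
  push_cast
  rw [one_div]

lemma fCoeff_zero_eq_integral (f : ℝ → ℝ) : fCoeff f 0 = (∫ θ, f θ ∂uniformAngle : ℝ) := by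
  simp only [fCoeff_eq_integral, Int.cast_zero, mul_zero, zero_mul, neg_zero, Complex.exp_zero,
    mul_one]
  exact integral_complex_ofReal

lemma fCoeff_eq_fourierCoeffOn (f : ℝ → ℝ) (n : ℤ) :
    fCoeff f n = fourierCoeffOn two_pi_pos (fun θ => (f θ : ℂ)) n := by
  rw [fourierCoeffOn_eq_integral, fCoeff_eq_integral, integral_uniformAngle, sub_zero, one_div]
  congr 1
  refine intervalIntegral.integral_congr fun θ _ => ?_
  have hpi : (π : ℂ) ≠ 0 := by exact_mod_cast pi_ne_zero
  simp only [smul_eq_mul, fourier_coe_apply, mul_comm (f θ : ℂ)]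
  congr 2
  push_cast
  field_simp

lemma fCoeff_neg (f : ℝ → ℝ) (n : ℤ) : fCoeff f (-n) = starRingEnd ℂ (fCoeff f n) := by
  rw [fCoeff_eq_integral, fCoeff_eq_integral, ← integral_conj]
  congr with θ
  rw [map_mul, Complex.conj_ofReal, ← Complex.exp_conj]
  simp

lemma hasSum_sq_norm_fCoeff (hf : Continuous f) :
    HasSum (fun n : ℤ => ‖fCoeff f n‖ ^ 2) (∫ θ, f θ ^ 2 ∂uniformAngle) := by
  have hL2 : MemLp (fun θ => (f θ : ℂ)) 2 (volume.restrict (Ioc 0 (2 * π))) := by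
    have h := memLp_uniformAngle_of_continuous (Complex.continuous_ofReal.comp hf) 2
    rw [uniformAngle_eq_smul] at h
    have hcancel := h.smul_measure (ENNReal.ofReal_ne_top (r := 2 * π))
    rwa [smul_smul, ← ENNReal.ofReal_mul two_pi_pos.le, mul_inv_cancel₀ two_pi_pos.ne',
      ENNReal.ofReal_one, one_smul] at hcancel
  simpa only [fCoeff_eq_fourierCoeffOn, integral_uniformAngle, sub_zero, Complex.norm_real,
    norm_eq_abs, sq_abs] using hasSum_sq_fourierCoeffOn two_pi_pos hL2

lemma norm_fCoeff_le {B : ℝ} (hB : ∀ θ, |f θ| ≤ B) : ‖fCoeff f n‖ ≤ B := by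
  rw [fCoeff_eq_integral]
  refine (norm_integral_le_of_norm_le_const (C := B) (Eventually.of_forall fun θ => ?_)).trans
    (by rw [probReal_univ, mul_one])
  have hexp : ‖Complex.exp (-(Complex.I * n * θ))‖ = 1 := by simp [Complex.norm_exp]
  rw [norm_mul, hexp, mul_one, Complex.norm_real]
  exact hB θ

lemma fCoeff_add (hf : Continuous f) (hg : Continuous g) :
    fCoeff (fun θ => f θ + g θ) n = fCoeff f n + fCoeff g n := by
  simp only [fCoeff_eq_integral, Complex.ofReal_add, add_mul]
  exact integral_uniformAngle_add (by fun_prop) (by fun_prop)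

lemma fCoeff_const_mul (a : ℝ) (f : ℝ → ℝ) (n : ℤ) :
    fCoeff (fun θ => a * f θ) n = a * fCoeff f n := by
  simp only [fCoeff_eq_integral, Complex.ofReal_mul, mul_assoc]
  exact integral_const_mul _ _

lemma fCoeff_of_hasDerivAt {f' : ℝ → ℝ} (hf : ∀ θ, HasDerivAt f (f' θ) θ) (hf' : Continuous f')
    (hper : f (2 * π) = f 0) (n : ℤ) : fCoeff f' n = Complex.I * n * fCoeff f n := by
  have hfc : Continuous f := continuous_iff_continuousAt.2 fun θ => (hf θ).continuousAt
  have hexp (θ : ℝ) : HasDerivAt (fun θ : ℝ => Complex.exp (-(Complex.I * n * θ)))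
      (Complex.exp (-(Complex.I * n * θ)) * -(Complex.I * n * 1)) θ :=
    ((Complex.ofRealCLM.hasDerivAt.const_mul _).fun_neg).cexp
  have hexp_two_pi : Complex.exp (-(Complex.I * n * ((2 * π : ℝ) : ℂ))) = 1 :=
    Complex.exp_eq_one_iff.2 ⟨-n, by push_cast; ring⟩
  have hparts := integral_uniformAngle_eq_zero_of_hasDerivAt
    (fun θ => (hf θ).ofReal_comp.mul (hexp θ)) (by fun_prop)
    (by simp [hexp_two_pi, hper, -Complex.ofReal_mul])
  rw [integral_uniformAngle_add (by fun_prop) (by fun_prop)] at hparts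
  simp_rw [fCoeff_eq_integral, ← integral_const_mul]
  rw [eq_neg_of_add_eq_zero_left hparts, ← integral_neg]
  congr with θ
  ring

lemma fCoeff_deriv (hf : ContDiff ℝ 1 f) (hper : Function.Periodic f (2 * π)) (n : ℤ) :
    fCoeff (deriv f) n = Complex.I * n * fCoeff f n :=
  fCoeff_of_hasDerivAt (fun θ => (hf.differentiable one_ne_zero θ).hasDerivAt)
    (hf.continuous_deriv le_rfl) hper.eq n

lemma norm_fCoeff_deriv (hf : ContDiff ℝ 1 f) (hper : Function.Periodic f (2 * π)) (n : ℤ) :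
    ‖fCoeff (deriv f) n‖ = |(n : ℝ)| * ‖fCoeff f n‖ := by
  rw [fCoeff_deriv hf hper, norm_mul, norm_mul, Complex.norm_I, one_mul, Complex.norm_intCast]

lemma fCoeff_const (c : ℝ) (hn : n ≠ 0) : fCoeff (fun _ => c) n = 0 := by
  have h := fCoeff_deriv (contDiff_const (c := c)) (fun _ => rfl) n
  have hzero : fCoeff (deriv fun _ => c) n = 0 := by simp [fCoeff_eq_integral]
  rw [hzero] at h
  simpa [hn] using h

/- Only the modes `0` and `±1` fail `4 ≤ n²`. -/
lemma four_mul_integral_sq_le (hf : ContDiff ℝ 1 f) (hper : Function.Periodic f (2 * π))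
    (hmean : ∫ θ, f θ ∂uniformAngle = 0) :
    4 * ∫ θ, f θ ^ 2 ∂uniformAngle ≤
      ∫ θ, deriv f θ ^ 2 ∂uniformAngle + 6 * ‖fCoeff f 1‖ ^ 2 := by
  have hsum := (hasSum_sq_norm_fCoeff (hf.continuous_deriv le_rfl)).add
    ((hasSum_ite_eq (1 : ℤ) (3 * ‖fCoeff f 1‖ ^ 2)).add
      (hasSum_ite_eq (-1 : ℤ) (3 * ‖fCoeff f (-1)‖ ^ 2)))
  have hmodes (n : ℤ) : 4 * ‖fCoeff f n‖ ^ 2 ≤ ‖fCoeff (deriv f) n‖ ^ 2 +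
      ((if n = 1 then 3 * ‖fCoeff f 1‖ ^ 2 else 0) +
        if n = -1 then 3 * ‖fCoeff f (-1)‖ ^ 2 else 0) := by
    rw [norm_fCoeff_deriv hf hper, mul_pow, sq_abs]
    rcases eq_or_ne n 1 with rfl | hn1
    · norm_num; linarith
    rcases eq_or_ne n (-1) with rfl | hn2
    · norm_num; linarith
    rcases eq_or_ne n 0 with rfl | hn0
    · simp [fCoeff_zero_eq_integral, hmean]
    have hn : (4 : ℝ) ≤ (n : ℝ) ^ 2 := by
      have h2 : |(2 : ℤ)| ≤ |n| := by rcases abs_cases n with h | h <;> simp <;> omega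
      exact_mod_cast sq_le_sq.2 h2
    simp only [hn1, hn2, if_false, add_zero]
    gcongr
  have hle := hasSum_le hmodes ((hasSum_sq_norm_fCoeff hf.continuous).mul_left 4) hsum
  rw [fCoeff_neg, RCLike.norm_conj] at hle
  linarith

lemma periodic_deriv {E : Type*} [NormedAddCommGroup E] [NormedSpace ℝ E] {f : ℝ → E} {c : ℝ}
    (hper : Function.Periodic f c) : Function.Periodic (deriv f) c := fun θ => by
  rw [← deriv_comp_add_const, funext hper]

section Seminorm

lemma seminorm2_nonneg (f : ℝ → ℝ) : 0 ≤ seminorm2 f :=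
  le_max_of_le_left (iSup_nonneg fun _ => by positivity)

variable (hf : ContDiff ℝ 2 f) (hper : Function.Periodic f (2 * π))
include hf hper

lemma sq_mul_norm_fCoeff_le (n : ℤ) :
    (n : ℝ) ^ 2 * ‖fCoeff f n‖ ≤ √(∫ θ, deriv (deriv f) θ ^ 2 ∂uniformAngle) := by
  have hf' : ContDiff ℝ 1 (deriv f) := hf.deriv'
  refine le_sqrt_of_sq_le (le_trans (le_of_eq ?_)
    (le_hasSum (hasSum_sq_norm_fCoeff (hf'.continuous_deriv le_rfl)) n fun _ _ => sq_nonneg _))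
  rw [norm_fCoeff_deriv hf' (periodic_deriv hper), norm_fCoeff_deriv (hf.of_le one_le_two) hper,
    ← sq_abs (n : ℝ)]
  ring

/- For `C²` functions the suprema in `seminorm2` are bounded, hence not junk. -/
lemma sq_mul_abs_re_fCoeff_le_seminorm2 (n : ℤ) :
    (n : ℝ) ^ 2 * |(fCoeff f n).re| ≤ seminorm2 f := by
  refine (le_ciSup (f := fun n : ℤ => (n : ℝ) ^ 2 * |(fCoeff f n).re|)
    ⟨√(∫ θ, deriv (deriv f) θ ^ 2 ∂uniformAngle), ?_⟩ n).trans (le_max_left _ _)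
  rintro _ ⟨m, rfl⟩
  exact (mul_le_mul_of_nonneg_left (Complex.abs_re_le_norm _) (sq_nonneg _)).trans
    (sq_mul_norm_fCoeff_le hf hper m)

lemma sq_mul_abs_im_fCoeff_le_seminorm2 (n : ℤ) :
    (n : ℝ) ^ 2 * |(fCoeff f n).im| ≤ seminorm2 f := by
  refine (le_ciSup (f := fun n : ℤ => (n : ℝ) ^ 2 * |(fCoeff f n).im|)
    ⟨√(∫ θ, deriv (deriv f) θ ^ 2 ∂uniformAngle), ?_⟩ n).trans (le_max_right _ _)
  rintro _ ⟨m, rfl⟩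
  exact (mul_le_mul_of_nonneg_left (Complex.abs_im_le_norm _) (sq_nonneg _)).trans
    (sq_mul_norm_fCoeff_le hf hper m)

lemma sq_norm_fCoeff_deriv_le (n : ℤ) :
    ‖fCoeff (deriv f) n‖ ^ 2 ≤ 2 * seminorm2 f ^ 2 * (1 / (n : ℝ) ^ 2) := by
  rw [norm_fCoeff_deriv (hf.of_le one_le_two) hper]
  rcases eq_or_ne n 0 with rfl | hn
  · simp
  have hre := pow_le_pow_left₀ (by positivity) (sq_mul_abs_re_fCoeff_le_seminorm2 hf hper n) 2
  have him := pow_le_pow_left₀ (by positivity) (sq_mul_abs_im_fCoeff_le_seminorm2 hf hper n) 2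
  rw [mul_one_div, le_div_iff₀ (by positivity)]
  calc (|(n : ℝ)| * ‖fCoeff f n‖) ^ 2 * (n : ℝ) ^ 2
      = ((n : ℝ) ^ 2 * |(fCoeff f n).re|) ^ 2 + ((n : ℝ) ^ 2 * |(fCoeff f n).im|) ^ 2 := by
        simp only [mul_pow, sq_abs, Complex.sq_norm, Complex.normSq_apply]
        ring
    _ ≤ 2 * seminorm2 f ^ 2 := by linarith

lemma integral_sq_deriv_le_seminorm2 :
    ∫ θ, deriv f θ ^ 2 ∂uniformAngle ≤ 2 * seminorm2 f ^ 2 * ∑' n : ℤ, 1 / (n : ℝ) ^ 2 :=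
  hasSum_le (sq_norm_fCoeff_deriv_le hf hper)
    (hasSum_sq_norm_fCoeff (hf.continuous_deriv one_le_two))
    ((summable_one_div_int_pow.2 one_lt_two).hasSum.mul_left _)

lemma oscBound_le_mul_seminorm2 :
    oscBound f ≤ 2 * π * √(2 * ∑' n : ℤ, 1 / (n : ℝ) ^ 2) * seminorm2 f := by
  have : 0 ≤ ∑' n : ℤ, 1 / (n : ℝ) ^ 2 := tsum_nonneg fun n => by positivity
  have hsqrt : √(∫ θ, deriv f θ ^ 2 ∂uniformAngle) ≤
      √(2 * ∑' n : ℤ, 1 / (n : ℝ) ^ 2) * seminorm2 f := by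
    rw [← sqrt_sq (seminorm2_nonneg f), ← sqrt_mul (by positivity)]
    exact sqrt_le_sqrt ((integral_sq_deriv_le_seminorm2 hf hper).trans_eq (by ring))
  rw [mul_assoc (2 * π)]
  exact mul_le_mul_of_nonneg_left hsqrt two_pi_pos.le

lemma mul_oscBound_lt_of_mul_seminorm2_le {C r : ℝ} (hC : 0 ≤ C) (hr : 0 < r)
    (hle : (C * (2 * π * √(2 * ∑' n : ℤ, 1 / (n : ℝ) ^ 2)) + 1) * seminorm2 f ≤ r) :
    C * oscBound f < r := by
  have hosc := mul_le_mul_of_nonneg_left (oscBound_le_mul_seminorm2 hf hper) hC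
  rcases (seminorm2_nonneg f).eq_or_lt with hzero | hpos
  · rw [← hzero] at hosc
    linarith
  · linarith

end Seminorm

end FourierCoefficients

section PowerEstimates

/- Induction on `n`: multiplying the remainder by `x` produces the next one up to
`(n + 2) r ^ (n + 1) (x - r) ^ 2`. -/
lemma abs_pow_sub_linear_le (n : ℕ) {r x : ℝ} (hr : 0 ≤ r) (hx : |x - r| ≤ r) :
    |x ^ (n + 2) - r ^ (n + 2) - (n + 2) * r ^ (n + 1) * (x - r)| ≤
      4 ^ n * r ^ n * (x - r) ^ 2 := by
  have hx2 : |x| ≤ 2 * r := by rw [abs_le] at hx ⊢; constructor <;> linarith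
  induction n with
  | zero => exact (abs_le.2 ⟨by norm_num; nlinarith [sq_nonneg (x - r)], by norm_num; nlinarith⟩)
  | succ n ih =>
    have hcoeff : (2 * 4 ^ n + (n + 2) : ℝ) ≤ 4 ^ (n + 1) := by
      have : ((n + 2 : ℕ) : ℝ) ≤ ((2 * 4 ^ n : ℕ) : ℝ) := by
        have := Nat.lt_pow_self (n := n) (a := 4) (by norm_num)
        exact_mod_cast (by omega : n + 2 ≤ 2 * 4 ^ n)
      push_cast at this
      rw [pow_succ]
      linarith
    calc |x ^ (n + 1 + 2) - r ^ (n + 1 + 2) - ((n + 1 : ℕ) + 2) * r ^ (n + 1 + 1) * (x - r)|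
        = |x * (x ^ (n + 2) - r ^ (n + 2) - (n + 2) * r ^ (n + 1) * (x - r)) +
            (n + 2) * r ^ (n + 1) * (x - r) ^ 2| := by push_cast; ring_nf
      _ ≤ |x| * |x ^ (n + 2) - r ^ (n + 2) - (n + 2) * r ^ (n + 1) * (x - r)| +
            (n + 2) * r ^ (n + 1) * (x - r) ^ 2 := by
          refine (abs_add_le _ _).trans_eq ?_
          rw [abs_mul, abs_of_nonneg (by positivity : 0 ≤ (n + 2) * r ^ (n + 1) * (x - r) ^ 2)]
      _ ≤ 2 * r * (4 ^ n * r ^ n * (x - r) ^ 2) + (n + 2) * r ^ (n + 1) * (x - r) ^ 2 := by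
          gcongr
      _ = (2 * 4 ^ n + (n + 2)) * (r ^ (n + 1) * (x - r) ^ 2) := by ring
      _ ≤ 4 ^ (n + 1) * (r ^ (n + 1) * (x - r) ^ 2) := by gcongr
      _ = 4 ^ (n + 1) * r ^ (n + 1) * (x - r) ^ 2 := by ring

lemma one_add_pow_le_one_add_two_pow_mul (n : ℕ) {x : ℝ} (h0 : 0 ≤ x) (h1 : x ≤ 1) :
    (1 + x) ^ n ≤ 1 + 2 ^ n * x := by
  have hconv := (convexOn_pow n).2 (x := (1 : ℝ)) (y := 2) (by norm_num) (by norm_num)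
    (sub_nonneg.2 h1) h0 (by ring)
  simp only [smul_eq_mul, mul_one, one_pow] at hconv
  rw [show 1 - x + x * 2 = 1 + x by ring] at hconv
  linarith

end PowerEstimates

section IntegrationByParts

/-- The right-hand side of the `p`-curve shortening equation. -/
noncomputable def pcsfSpeed (p : ℕ) (k : ℝ → ℝ) (θ : ℝ) : ℝ :=
  k θ ^ 2 * (k θ ^ (p - 1) * deriv (deriv k) θ + ((p : ℝ) - 1) * k θ ^ (p - 2) * deriv k θ ^ 2
    + 1 / (p : ℝ) * k θ ^ p)

lemma mul_pcsfSpeed {p : ℕ} (hp : 1 ≤ p) (k : ℝ → ℝ) (θ : ℝ) :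
    p * pcsfSpeed p k θ = p * (k θ ^ (p + 1) * deriv (deriv k) θ) +
      p * (p - 1) * (k θ ^ p * deriv k θ ^ 2) + k θ ^ (p + 2) := by
  obtain ⟨q, rfl⟩ := Nat.exists_eq_add_of_le' hp
  rcases q with _ | q
  · simp only [zero_add, Nat.cast_one, pcsfSpeed, tsub_self, pow_zero, one_mul, sub_self,
      zero_mul, add_zero, ne_eq, one_ne_zero, not_false_eq_true, div_self, pow_one, mul_zero]
    ring
  · have hq : ((q + 1 + 1 : ℕ) : ℝ) ≠ 0 := by positivity
    simp only [pcsfSpeed, Nat.add_sub_cancel, show q + 1 + 1 - 2 = q by omega]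
    field_simp
    push_cast
    ring

variable {k : ℝ → ℝ} (hk : ContDiff ℝ 2 k) (hper : Function.Periodic k (2 * π))
include hk

lemma hasDerivAt_of_contDiff_two (θ : ℝ) : HasDerivAt k (deriv k θ) θ :=
  (hk.differentiable two_ne_zero θ).hasDerivAt

lemma hasDerivAt_deriv_of_contDiff_two (θ : ℝ) : HasDerivAt (deriv k) (deriv (deriv k) θ) θ :=
  (hk.differentiable_deriv_two θ).hasDerivAt

lemma continuous_deriv_deriv_of_contDiff_two : Continuous (deriv (deriv k)) :=
  ContDiff.continuous_deriv (n := 1) hk.deriv' le_rfl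

include hper

lemma integral_pow_mul_deriv_deriv (n : ℕ) :
    ∫ θ, k θ ^ n * deriv (deriv k) θ ∂uniformAngle =
      -(n * ∫ θ, k θ ^ (n - 1) * deriv k θ ^ 2 ∂uniformAngle) := by
  have hc := hk.continuous
  have hc' := hk.continuous_deriv one_le_two
  have := continuous_deriv_deriv_of_contDiff_two hk
  have hparts := integral_uniformAngle_eq_zero_of_hasDerivAt
    (fun θ => ((hasDerivAt_of_contDiff_two hk θ).fun_pow n).mul
      (hasDerivAt_deriv_of_contDiff_two hk θ)) (by fun_prop)
    (by simp [hper.eq, (periodic_deriv hper).eq])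
  rw [integral_uniformAngle_add (by fun_prop) (by fun_prop)] at hparts
  rw [eq_neg_of_add_eq_zero_right hparts, ← integral_const_mul]
  congr with θ
  ring

lemma integral_pow_mul_sq_deriv_mul_deriv_deriv (n : ℕ) :
    3 * ∫ θ, k θ ^ n * deriv k θ ^ 2 * deriv (deriv k) θ ∂uniformAngle =
      -(n * ∫ θ, k θ ^ (n - 1) * deriv k θ ^ 4 ∂uniformAngle) := by
  have hc := hk.continuous
  have hc' := hk.continuous_deriv one_le_two
  have := continuous_deriv_deriv_of_contDiff_two hk
  have hparts := integral_uniformAngle_eq_zero_of_hasDerivAt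
    (fun θ => ((hasDerivAt_of_contDiff_two hk θ).fun_pow n).mul
      ((hasDerivAt_deriv_of_contDiff_two hk θ).fun_pow 3)) (by fun_prop)
    (by simp [hper.eq, (periodic_deriv hper).eq])
  rw [integral_uniformAngle_add (by fun_prop) (by fun_prop)] at hparts
  simp_rw [← integral_const_mul, ← integral_neg]
  refine Eq.trans ?_ ((eq_neg_of_add_eq_zero_right hparts).trans ?_)
  · congr with θ
    push_cast
    ring
  · rw [← integral_neg]
    congr with θ
    ring

lemma integral_pcsfSpeed {p : ℕ} (hp : 1 ≤ p) :
    p * ∫ θ, pcsfSpeed p k θ ∂uniformAngle =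
      ∫ θ, k θ ^ (p + 2) ∂uniformAngle -
        2 * p * ∫ θ, k θ ^ p * deriv k θ ^ 2 ∂uniformAngle := by
  have hc := hk.continuous
  have hc' := hk.continuous_deriv one_le_two
  have := continuous_deriv_deriv_of_contDiff_two hk
  simp_rw [← integral_const_mul (p : ℝ), mul_pcsfSpeed hp]
  rw [integral_uniformAngle_add (by fun_prop) (by fun_prop),
    integral_uniformAngle_add (by fun_prop) (by fun_prop), integral_const_mul, integral_const_mul,
    integral_pow_mul_deriv_deriv hk hper, Nat.add_sub_cancel]
  push_cast
  ring

lemma integral_deriv_deriv_mul_pcsfSpeed {p : ℕ} (hp : 1 ≤ p) :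
    p * ∫ θ, deriv (deriv k) θ * pcsfSpeed p k θ ∂uniformAngle =
      p * ∫ θ, k θ ^ (p + 1) * deriv (deriv k) θ ^ 2 ∂uniformAngle -
        p ^ 2 * (p - 1) / 3 * ∫ θ, k θ ^ (p - 1) * deriv k θ ^ 4 ∂uniformAngle -
        (p + 2) * ∫ θ, k θ ^ (p + 1) * deriv k θ ^ 2 ∂uniformAngle := by
  have hc := hk.continuous
  have hc' := hk.continuous_deriv one_le_two
  have := continuous_deriv_deriv_of_contDiff_two hk
  have hexpand (θ : ℝ) : p * (deriv (deriv k) θ * pcsfSpeed p k θ) =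
      p * (k θ ^ (p + 1) * deriv (deriv k) θ ^ 2) +
        p * (p - 1) * (k θ ^ p * deriv k θ ^ 2 * deriv (deriv k) θ) +
        k θ ^ (p + 2) * deriv (deriv k) θ := by
    rw [mul_left_comm, mul_pcsfSpeed hp]
    ring
  have hcubic := integral_pow_mul_sq_deriv_mul_deriv_deriv hk hper p
  have hquad := integral_pow_mul_deriv_deriv hk hper (p + 2)
  rw [show p + 2 - 1 = p + 1 by omega] at hquad
  push_cast at hquad
  simp_rw [← integral_const_mul (p : ℝ) fun θ => deriv (deriv k) θ * pcsfSpeed p k θ, hexpand]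
  rw [integral_uniformAngle_add (by fun_prop) (by fun_prop),
    integral_uniformAngle_add (by fun_prop) (by fun_prop), integral_const_mul, integral_const_mul]
  linear_combination p * (p - 1) / 3 * hcubic + hquad

end IntegrationByParts

section NearlyCircular

variable {k : ℝ → ℝ} {r δ : ℝ}

/-- The function `k` is close to the positive constant `r`: it is `2π`-periodic and `C²` with mean
value `r`, and its oscillation bound relative to `r` is `δ ≤ 1/2`. -/
structure IsNearlyConst (k : ℝ → ℝ) (r δ : ℝ) : Prop where
  contDiff : ContDiff ℝ 2 k
  periodic : Function.Periodic k (2 * π)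
  mean_pos : 0 < r
  mean_eq : ∫ θ, k θ ∂uniformAngle = r
  oscBound_eq : oscBound k = δ * r
  le_half : δ ≤ 1 / 2

namespace IsNearlyConst

variable (h : IsNearlyConst k r δ)
include h

lemma nonneg : 0 ≤ δ :=
  nonneg_of_mul_nonneg_left (h.oscBound_eq ▸ oscBound_nonneg k) h.mean_pos

lemma continuous : Continuous k := h.contDiff.continuous

lemma continuous_deriv : Continuous (deriv k) := h.contDiff.continuous_deriv one_le_two

lemma continuous_deriv_deriv : Continuous (deriv (deriv k)) :=
  continuous_deriv_deriv_of_contDiff_two h.contDiff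

lemma integral_deriv : ∫ θ, deriv k θ ∂uniformAngle = 0 :=
  integral_deriv_eq_zero (h.contDiff.of_le one_le_two) h.periodic

lemma abs_sub_le (θ : ℝ) : |k θ - r| ≤ δ * r := by
  simpa only [h.mean_eq, h.oscBound_eq] using
    abs_sub_integral_le_oscBound (h.contDiff.of_le one_le_two) h.periodic θ

lemma le_apply (θ : ℝ) : (1 - δ) * r ≤ k θ := by
  linarith [(abs_le.1 (h.abs_sub_le θ)).1]

lemma apply_le (θ : ℝ) : k θ ≤ (1 + δ) * r := by
  linarith [(abs_le.1 (h.abs_sub_le θ)).2]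

lemma half_le_apply (θ : ℝ) : r / 2 ≤ k θ := by
  nlinarith [h.le_apply θ, h.le_half, h.mean_pos]

lemma apply_pos (θ : ℝ) : 0 < k θ := (half_pos h.mean_pos).trans_le (h.half_le_apply θ)

lemma apply_le_two_mul (θ : ℝ) : k θ ≤ 2 * r := by
  nlinarith [h.apply_le θ, h.le_half, h.mean_pos]

lemma sq_mul_sq_eq : (δ * r) ^ 2 = 4 * π ^ 2 * ∫ θ, deriv k θ ^ 2 ∂uniformAngle := by
  rw [← h.oscBound_eq, oscBound_sq]

lemma integral_sq_deriv_le : ∫ θ, deriv k θ ^ 2 ∂uniformAngle ≤ (δ * r) ^ 2 := by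
  have hE : 0 ≤ ∫ θ, deriv k θ ^ 2 ∂uniformAngle := integral_nonneg fun θ => sq_nonneg _
  rw [h.sq_mul_sq_eq]
  exact le_mul_of_one_le_left hE (by nlinarith [pi_gt_three])

/- Expanding `(k - r)² / k = k - 2r + r²/k` shows that `k` has the same `n`-th Fourier coefficient
as the quadratically small function `(k - r)² / k`. -/
lemma norm_fCoeff_le_of_fCoeff_inv_eq_zero {n : ℤ} (hn : n ≠ 0)
    (hinv : fCoeff (fun θ => (k θ)⁻¹) n = 0) : ‖fCoeff k n‖ ≤ 2 * δ ^ 2 * r := by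
  have hk_inv : Continuous fun θ => (k θ)⁻¹ := h.continuous.inv₀ fun θ => (h.apply_pos θ).ne'
  have hexpand : (fun θ => (k θ - r) ^ 2 / k θ) =
      fun θ => k θ + (-(2 * r) + r ^ 2 * (k θ)⁻¹) := by
    ext θ
    have := (h.apply_pos θ).ne'
    field_simp
    ring
  have hcoeff : fCoeff (fun θ => (k θ - r) ^ 2 / k θ) n = fCoeff k n := by
    rw [hexpand, fCoeff_add h.continuous (by fun_prop),
      fCoeff_add continuous_const (by fun_prop), fCoeff_const_mul, hinv, fCoeff_const _ hn]
    simp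
  rw [← hcoeff]
  refine norm_fCoeff_le fun θ => ?_
  have hr := h.mean_pos
  have hsq : (k θ - r) ^ 2 ≤ (δ * r) ^ 2 := sq_le_sq' (abs_le.1 (h.abs_sub_le θ)).1
    (abs_le.1 (h.abs_sub_le θ)).2
  rw [abs_of_nonneg (div_nonneg (sq_nonneg _) (h.apply_pos θ).le)]
  calc (k θ - r) ^ 2 / k θ ≤ (δ * r) ^ 2 / (r / 2) := by gcongr; exact h.half_le_apply θ
    _ = 2 * δ ^ 2 * r := by field_simp

lemma wirtinger_of_fCoeff_inv_eq_zero (hinv : fCoeff (fun θ => (k θ)⁻¹) 1 = 0) :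
    (4 - 480 * δ) * ∫ θ, deriv k θ ^ 2 ∂uniformAngle ≤
      ∫ θ, deriv (deriv k) θ ^ 2 ∂uniformAngle := by
  have hδ := h.nonneg
  have : 0 ≤ ∫ θ, deriv k θ ^ 2 ∂uniformAngle := integral_nonneg fun θ => sq_nonneg _
  have hwirt := four_mul_integral_sq_le (f := deriv k) h.contDiff.deriv'
    (periodic_deriv h.periodic) h.integral_deriv
  have hmode : ‖fCoeff (deriv k) 1‖ ^ 2 ≤ 80 * δ * ∫ θ, deriv k θ ^ 2 ∂uniformAngle := by
    rw [norm_fCoeff_deriv (h.contDiff.of_le one_le_two) h.periodic, Int.cast_one, abs_one, one_mul]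
    calc ‖fCoeff k 1‖ ^ 2 ≤ (2 * δ ^ 2 * r) ^ 2 := by
          gcongr
          exact h.norm_fCoeff_le_of_fCoeff_inv_eq_zero one_ne_zero hinv
      _ = 4 * δ ^ 2 * (δ * r) ^ 2 := by ring
      _ = 16 * π ^ 2 * δ ^ 2 * ∫ θ, deriv k θ ^ 2 ∂uniformAngle := by
          rw [h.sq_mul_sq_eq]; ring
      _ ≤ 80 * δ * ∫ θ, deriv k θ ^ 2 ∂uniformAngle := by
          gcongr ?_ * _
          have hpi : π ^ 2 ≤ 10 := by nlinarith [pi_lt_d2, pi_pos]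
          nlinarith [mul_nonneg hδ (sub_nonneg.2 h.le_half), mul_nonneg (sq_nonneg δ)
            (sub_nonneg.2 hpi)]
  linarith

lemma abs_integral_pow_sub_le (n : ℕ) :
    |∫ θ, k θ ^ (n + 2) ∂uniformAngle - r ^ (n + 2)| ≤ 4 ^ n * r ^ n * (δ * r) ^ 2 := by
  have hr := h.mean_pos
  have hc := h.continuous
  have hint {f : ℝ → ℝ} (hf : Continuous f) := integrable_uniformAngle_of_continuous hf
  have htaylor : ∫ θ, k θ ^ (n + 2) ∂uniformAngle - r ^ (n + 2) =
      ∫ θ, (k θ ^ (n + 2) - r ^ (n + 2) - (n + 2) * r ^ (n + 1) * (k θ - r)) ∂uniformAngle := by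
    rw [integral_sub (hint (by fun_prop)) (hint (by fun_prop)),
      integral_sub (hint (by fun_prop)) (hint (by fun_prop)), integral_const_mul,
      integral_sub (hint (by fun_prop)) (hint (by fun_prop)), h.mean_eq]
    simp
  rw [htaylor, ← norm_eq_abs]
  refine (norm_integral_le_of_norm_le_const (μ := uniformAngle)
    (C := 4 ^ n * r ^ n * (δ * r) ^ 2) (Eventually.of_forall fun θ => ?_)).trans
    (by rw [probReal_univ, mul_one])
  have hosc := h.abs_sub_le θ
  refine (abs_pow_sub_linear_le n hr.le (hosc.trans ?_)).trans ?_
  · nlinarith [h.le_half]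
  · rw [← sq_abs (k θ - r)]
    gcongr

lemma integral_pow_mul_le (n : ℕ) {f : ℝ → ℝ} (hf : Continuous f) (hf0 : ∀ θ, 0 ≤ f θ) :
    ∫ θ, k θ ^ n * f θ ∂uniformAngle ≤ ((1 + δ) * r) ^ n * ∫ θ, f θ ∂uniformAngle := by
  have hc := h.continuous
  rw [← integral_const_mul]
  refine integral_uniformAngle_mono (by fun_prop) (by fun_prop) fun θ => ?_
  have := h.apply_pos θ
  have := hf0 θ
  gcongr
  exact h.apply_le θ

lemma le_integral_pow_mul (n : ℕ) {f : ℝ → ℝ} (hf : Continuous f) (hf0 : ∀ θ, 0 ≤ f θ) :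
    ((1 - δ) * r) ^ n * ∫ θ, f θ ∂uniformAngle ≤ ∫ θ, k θ ^ n * f θ ∂uniformAngle := by
  have hc := h.continuous
  have hr := h.mean_pos
  have hδ : 0 ≤ 1 - δ := by linarith [h.le_half]
  rw [← integral_const_mul]
  refine integral_uniformAngle_mono (by fun_prop) (by fun_prop) fun θ => ?_
  have := hf0 θ
  gcongr
  exact h.le_apply θ

lemma one_add_le_two : 1 + δ ≤ 2 := by linarith [h.le_half]

lemma abs_integral_pcsfSpeed_sub_le {p : ℕ} (hp : 1 ≤ p) :
    |p * ∫ θ, pcsfSpeed p k θ ∂uniformAngle - r ^ (p + 2)| ≤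
      (4 ^ p + 2 * p * 2 ^ p) * r ^ p * (δ * r) ^ 2 := by
  have hr := h.mean_pos
  have := h.continuous
  have hc' := h.continuous_deriv
  have hgrad0 : 0 ≤ ∫ θ, k θ ^ p * deriv k θ ^ 2 ∂uniformAngle :=
    integral_nonneg fun θ => mul_nonneg (pow_nonneg (h.apply_pos θ).le _) (sq_nonneg _)
  have hgrad : ∫ θ, k θ ^ p * deriv k θ ^ 2 ∂uniformAngle ≤ 2 ^ p * r ^ p * (δ * r) ^ 2 := by
    refine (h.integral_pow_mul_le p (by fun_prop) fun θ => sq_nonneg _).trans ?_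
    rw [mul_pow]
    have := h.nonneg
    gcongr
    · exact h.one_add_le_two
    · exact h.integral_sq_deriv_le
  calc |p * ∫ θ, pcsfSpeed p k θ ∂uniformAngle - r ^ (p + 2)|
      = |∫ θ, k θ ^ (p + 2) ∂uniformAngle - r ^ (p + 2) -
          2 * p * ∫ θ, k θ ^ p * deriv k θ ^ 2 ∂uniformAngle| := by
        rw [integral_pcsfSpeed h.contDiff h.periodic hp, sub_right_comm]
    _ ≤ |∫ θ, k θ ^ (p + 2) ∂uniformAngle - r ^ (p + 2)| +
          2 * p * ∫ θ, k θ ^ p * deriv k θ ^ 2 ∂uniformAngle := by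
        refine (abs_sub _ _).trans_eq ?_
        rw [abs_of_nonneg (mul_nonneg (by positivity) hgrad0)]
    _ ≤ 4 ^ p * r ^ p * (δ * r) ^ 2 + 2 * p * (2 ^ p * r ^ p * (δ * r) ^ 2) := by
        gcongr
        exact h.abs_integral_pow_sub_le p
    _ = (4 ^ p + 2 * p * 2 ^ p) * r ^ p * (δ * r) ^ 2 := by ring

lemma le_integral_pow_mul_sq_deriv_deriv (n : ℕ) :
    r ^ n * (1 - n * δ) * ∫ θ, deriv (deriv k) θ ^ 2 ∂uniformAngle ≤
      ∫ θ, k θ ^ n * deriv (deriv k) θ ^ 2 ∂uniformAngle := by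
  have hc'' := h.continuous_deriv_deriv
  have hr := h.mean_pos
  refine le_trans ?_ (h.le_integral_pow_mul n (by fun_prop) fun θ => sq_nonneg _)
  rw [mul_comm (1 - δ), mul_pow]
  gcongr
  simpa [sub_eq_add_neg] using
    one_add_mul_le_pow (a := -δ) (by linarith [h.le_half]) n

lemma integral_pow_mul_sq_deriv_le (n : ℕ) :
    ∫ θ, k θ ^ n * deriv k θ ^ 2 ∂uniformAngle ≤
      r ^ n * (1 + 2 ^ n * δ) * ∫ θ, deriv k θ ^ 2 ∂uniformAngle := by
  have hc' := h.continuous_deriv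
  have hr := h.mean_pos
  refine (h.integral_pow_mul_le n (by fun_prop) fun θ => sq_nonneg _).trans ?_
  rw [mul_comm (1 + δ), mul_pow]
  gcongr
  exact one_add_pow_le_one_add_two_pow_mul n h.nonneg (by linarith [h.le_half])

lemma integral_pow_mul_deriv_pow_four_le (n : ℕ) :
    ∫ θ, k θ ^ n * deriv k θ ^ 4 ∂uniformAngle ≤
      2 ^ n * r ^ (n + 2) * δ ^ 2 * ∫ θ, deriv (deriv k) θ ^ 2 ∂uniformAngle := by
  have hc' := h.continuous_deriv
  have hr := h.mean_pos
  have hsup (θ : ℝ) : deriv k θ ^ 2 ≤ oscBound (deriv k) ^ 2 := by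
    have := abs_sub_integral_le_oscBound (f := deriv k) h.contDiff.deriv'
      (periodic_deriv h.periodic) θ
    rw [h.integral_deriv, sub_zero] at this
    rw [← sq_abs]
    gcongr
  have hquart : ∫ θ, deriv k θ ^ 4 ∂uniformAngle ≤
      oscBound (deriv k) ^ 2 * ∫ θ, deriv k θ ^ 2 ∂uniformAngle := by
    rw [← integral_const_mul]
    refine integral_uniformAngle_mono (by fun_prop) (by fun_prop) fun θ => ?_
    nlinarith [hsup θ, sq_nonneg (deriv k θ)]
  calc ∫ θ, k θ ^ n * deriv k θ ^ 4 ∂uniformAngle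
      ≤ ((1 + δ) * r) ^ n * ∫ θ, deriv k θ ^ 4 ∂uniformAngle :=
        h.integral_pow_mul_le n (by fun_prop) fun θ => by positivity
    _ ≤ 2 ^ n * r ^ n * (oscBound (deriv k) ^ 2 * ∫ θ, deriv k θ ^ 2 ∂uniformAngle) := by
        rw [mul_pow]
        have := h.nonneg
        gcongr
        exact h.one_add_le_two
    _ = 2 ^ n * r ^ n * (δ * r) ^ 2 * ∫ θ, deriv (deriv k) θ ^ 2 ∂uniformAngle := by
        rw [h.sq_mul_sq_eq, oscBound_sq]
        ring
    _ = 2 ^ n * r ^ (n + 2) * δ ^ 2 * ∫ θ, deriv (deriv k) θ ^ 2 ∂uniformAngle := by ring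

lemma mul_integral_pow_mul_deriv_pow_four_le {p : ℕ} (hp : 1 ≤ p) :
    p ^ 2 * (p - 1) / 3 * ∫ θ, k θ ^ (p - 1) * deriv k θ ^ 4 ∂uniformAngle ≤
      p ^ 3 * 2 ^ p / 2 * δ * (r ^ (p + 1) * ∫ θ, deriv (deriv k) θ ^ 2 ∂uniformAngle) := by
  have hδ := h.nonneg
  have hr := h.mean_pos
  have hp' : (0 : ℝ) ≤ p - 1 := sub_nonneg.2 (by exact_mod_cast hp)
  have hquart := h.integral_pow_mul_deriv_pow_four_le (p - 1)
  rw [show p - 1 + 2 = p + 1 by omega] at hquart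
  set Q := ∫ θ, deriv (deriv k) θ ^ 2 ∂uniformAngle
  have : 0 ≤ Q := integral_nonneg fun θ => sq_nonneg _
  have hpow : (2 : ℝ) ^ p = 2 * 2 ^ (p - 1) := by rw [← pow_succ', Nat.sub_add_cancel hp]
  have hδ2 : δ ^ 2 ≤ δ := by nlinarith [h.le_half]
  calc p ^ 2 * (p - 1) / 3 * ∫ θ, k θ ^ (p - 1) * deriv k θ ^ 4 ∂uniformAngle
      ≤ p ^ 2 * (p - 1) / 3 * (2 ^ (p - 1) * r ^ (p + 1) * δ ^ 2 * Q) := by gcongr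
    _ ≤ p ^ 2 * p / 1 * (2 ^ (p - 1) * r ^ (p + 1) * δ * Q) := by gcongr <;> linarith
    _ = p ^ 3 * 2 ^ p / 2 * δ * (r ^ (p + 1) * Q) := by rw [hpow]; ring

lemma energy_le_neg_dissipation {p : ℕ} (hp : 1 ≤ p) :
    p * (-2 * ∫ θ, deriv (deriv k) θ * pcsfSpeed p k θ ∂uniformAngle) ≤
      r ^ (p + 1) * ((-2 * p + (2 * p * (p + 1) + p ^ 3 * 2 ^ p) * δ) *
          (∫ θ, deriv (deriv k) θ ^ 2 ∂uniformAngle) +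
        2 * (p + 2) * (1 + 2 ^ (p + 1) * δ) * ∫ θ, deriv k θ ^ 2 ∂uniformAngle) := by
  have hdiss := mul_le_mul_of_nonneg_left (h.le_integral_pow_mul_sq_deriv_deriv (p + 1))
    (by positivity : (0 : ℝ) ≤ p)
  have hgrad := mul_le_mul_of_nonneg_left (h.integral_pow_mul_sq_deriv_le (p + 1))
    (by positivity : (0 : ℝ) ≤ p + 2)
  have hquart := h.mul_integral_pow_mul_deriv_pow_four_le hp
  push_cast at hdiss
  rw [mul_left_comm, integral_deriv_deriv_mul_pcsfSpeed h.contDiff h.periodic hp]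
  linarith

/- The gain `-8p` from the dissipation, by Wirtinger's inequality, beats the loss `2(p + 2)`. -/
lemma energy_decay {p : ℕ} (hp : 1 ≤ p) (hinv : fCoeff (fun θ => (k θ)⁻¹) 1 = 0) {B : ℝ}
    (hB : B = 2 * p * (p + 1) + p ^ 3 * 2 ^ p) (hsmall : B * δ ≤ 2 * p) :
    p * (-2 * ∫ θ, deriv (deriv k) θ * pcsfSpeed p k θ ∂uniformAngle) ≤
      r ^ (p + 1) * ((-(6 * p - 4) + (960 * p + 4 * B + (p + 2) * 2 ^ (p + 2)) * δ) *
        ∫ θ, deriv k θ ^ 2 ∂uniformAngle) := by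
  have hr := h.mean_pos
  have hB0 : 0 ≤ B := by rw [hB]; positivity
  have hwirt := h.wirtinger_of_fCoeff_inv_eq_zero hinv
  have henergy := h.energy_le_neg_dissipation hp
  rw [← hB] at henergy
  refine henergy.trans (mul_le_mul_of_nonneg_left ?_ (by positivity))
  set E := ∫ θ, deriv k θ ^ 2 ∂uniformAngle
  set Q := ∫ θ, deriv (deriv k) θ ^ 2 ∂uniformAngle
  have : 0 ≤ E := integral_nonneg fun θ => sq_nonneg _
  calc (-2 * p + B * δ) * Q + 2 * (p + 2) * (1 + 2 ^ (p + 1) * δ) * E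
      ≤ (-2 * p + B * δ) * ((4 - 480 * δ) * E) + 2 * (p + 2) * (1 + 2 ^ (p + 1) * δ) * E := by
        gcongr ?_ + _
        exact mul_le_mul_of_nonpos_left hwirt (by linarith)
    _ = (-(6 * p - 4) + (960 * p + 4 * B + (p + 2) * 2 ^ (p + 2)) * δ) * E -
          480 * B * δ ^ 2 * E := by ring
    _ ≤ _ := sub_le_self _ (by positivity)

end IsNearlyConst

lemma fCoeff_inv_one_eq_zero_of_closed (hk : ∫ θ in (0 : ℝ)..(2 * π),
    Complex.exp (Complex.I * θ) / k θ = 0) : fCoeff (fun θ => (k θ)⁻¹) 1 = 0 := by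
  have hneg : fCoeff (fun θ => (k θ)⁻¹) (-1) = 0 := by
    rw [fCoeff, ← mul_zero (1 / (2 * (π : ℂ))), ← hk]
    congr 2 with θ
    push_cast
    rw [div_eq_inv_mul]
    ring_nf
  rwa [fCoeff_neg, map_eq_zero] at hneg

/-- `C` is a constant for which every closed curve whose curvature `k` has mean `r` and satisfies
`C * oscBound k ≤ r` obeys the pinching `k ≤ 2r` and the two estimates saying that, under the flow,
`r` and `E = ⟨k'²⟩` nearly satisfy `p r' = r^(p+2)` and `p E' ≤ -(6p - 4) r^(p+1) E`. Closedness is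
the vanishing of the first Fourier coefficient of the radius of curvature. -/
def HasNearlyCircularEstimates (p : ℕ) (C : ℝ) : Prop :=
  ∀ (k : ℝ → ℝ) (r : ℝ), ContDiff ℝ 2 k → Function.Periodic k (2 * π) →
    fCoeff (fun θ => (k θ)⁻¹) 1 = 0 → 0 < r → ∫ θ, k θ ∂uniformAngle = r → C * oscBound k ≤ r →
    (∀ θ, k θ ≤ 2 * r) ∧
    |p * ∫ θ, pcsfSpeed p k θ ∂uniformAngle - r ^ (p + 2)| ≤ C * r ^ p * oscBound k ^ 2 ∧
    p * (-2 * ∫ θ, deriv (deriv k) θ * pcsfSpeed p k θ ∂uniformAngle) ≤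
      r ^ (p + 1) * ((-(6 * p - 4) + C * (oscBound k / r)) * ∫ θ, deriv k θ ^ 2 ∂uniformAngle)

lemma exists_hasNearlyCircularEstimates {p : ℕ} (hp : 1 ≤ p) :
    ∃ C : ℝ, 2 ≤ C ∧ HasNearlyCircularEstimates p C := by
  have hp' : (1 : ℝ) ≤ p := by exact_mod_cast hp
  set B : ℝ := 2 * p * (p + 1) + p ^ 3 * 2 ^ p with hB
  have hB0 : 0 ≤ B := by positivity
  set C₁ : ℝ := 4 ^ p + 2 * p * 2 ^ p
  set C₂ : ℝ := 960 * p + 4 * B + (p + 2) * 2 ^ (p + 2)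
  have hC₁ : 0 ≤ C₁ := by positivity
  have hC₂ : B ≤ C₂ := by
    have : (0 : ℝ) ≤ (p + 2) * 2 ^ (p + 2) := by positivity
    linarith
  refine ⟨C₁ + C₂ + 2, by linarith, fun k r hk hper hinv hr hmean hsmall => ?_⟩
  have hosc := oscBound_nonneg k
  have hδ0 : 0 ≤ oscBound k / r := by positivity
  have hδ : (C₁ + C₂ + 2) * (oscBound k / r) ≤ 1 := by
    rwa [← mul_div_assoc, div_le_one hr]
  have hnear : IsNearlyConst k r (oscBound k / r) :=
    ⟨hk, hper, hr, hmean, (div_mul_cancel₀ _ hr.ne').symm, by nlinarith⟩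
  refine ⟨hnear.apply_le_two_mul, ?_, ?_⟩
  · refine (hnear.abs_integral_pcsfSpeed_sub_le hp).trans ?_
    rw [← hnear.oscBound_eq]
    gcongr ?_ * _ * _
    linarith
  · refine (hnear.energy_decay hp hinv hB (by nlinarith)).trans ?_
    gcongr _ * ((_ + ?_ * _) * _)
    linarith

end NearlyCircular

section BlowUpRate

lemma abs_sub_mul_le_of_tendsto_zero {g g' : ℝ → ℝ} {t T c B : ℝ} (htT : t < T)
    (hg : ∀ s ∈ Ico t T, HasDerivAt g (g' s) s) (hB : ∀ s ∈ Ico t T, |g' s + c| ≤ B)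
    (hlim : Tendsto g (𝓝[<] T) (𝓝 0)) : |g t - c * (T - t)| ≤ B * (T - t) := by
  have hmvt : ∀ s ∈ Ico t T, |(g s + c * s) - (g t + c * t)| ≤ B * (s - t) := fun s hs => by
    have := (convex_Ico t T).norm_image_sub_le_of_norm_hasDerivWithin_le
      (f := fun s => g s + c * s) (f' := fun s => g' s + c) (C := B)
      (fun x hx => ((hg x hx).add ((hasDerivAt_id x).const_mul c |>.congr_deriv
        (mul_one c))).hasDerivWithinAt) hB (left_mem_Ico.2 htT) hs
    rwa [norm_eq_abs, norm_eq_abs, abs_of_nonneg (sub_nonneg.2 hs.1)] at this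
  have hid : Tendsto (fun s : ℝ => s) (𝓝[<] T) (𝓝 T) := tendsto_id.mono_left nhdsWithin_le_nhds
  have hle := le_of_tendsto_of_tendsto ((hlim.add (hid.const_mul c)).sub_const _).abs
    ((hid.sub_const t).const_mul B)
    (eventually_of_mem (Ico_mem_nhdsLT htT) hmvt)
  rwa [show 0 + c * T - (g t + c * t) = -(g t - c * (T - t)) by ring, abs_neg] at hle

/-- The differential inequalities on `[t₁, T)` governing the mean curvature `r` and the energy `Y`
of a nearly circular solution; they are only required while `C² Y ≤ r²`. -/
structure IsMeanEnergySystem (p N : ℕ) (C t₁ T : ℝ) (r r' Y Y' : ℝ → ℝ) : Prop where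
  one_le_p : 1 ≤ p
  one_le_N : 1 ≤ N
  two_le_C : 2 ≤ C
  lt : t₁ < T
  pos : ∀ t ∈ Ico t₁ T, 0 < r t
  nonneg : ∀ t ∈ Ico t₁ T, 0 ≤ Y t
  hasDerivAt_mean : ∀ t ∈ Ico t₁ T, HasDerivAt r (r' t) t
  hasDerivAt_energy : ∀ t ∈ Ico t₁ T, HasDerivAt Y (Y' t) t
  mean_estimate : ∀ t ∈ Ico t₁ T, C ^ 2 * Y t ≤ r t ^ 2 →
    |p * r' t - r t ^ (p + 2)| ≤ C * r t ^ p * Y t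
  energy_estimate : ∀ t ∈ Ico t₁ T, C ^ 2 * Y t ≤ r t ^ 2 →
    p * Y' t ≤ r t ^ (p + 1) * ((-N + C * (√(Y t) / r t)) * Y t)
  small_init : C ^ 2 * Y t₁ ≤ r t₁ ^ 2

namespace IsMeanEnergySystem

variable {p N : ℕ} {C t₁ T : ℝ} {r r' Y Y' : ℝ → ℝ} (h : IsMeanEnergySystem p N C t₁ T r r' Y Y')
include h

lemma p_pos : (0 : ℝ) < p := by exact_mod_cast h.one_le_p

lemma C_pos : 0 < C := two_pos.trans_le h.two_le_C

lemma mul_sqrt_le_of_small {t : ℝ} (ht : t ∈ Ico t₁ T) (hs : C ^ 2 * Y t ≤ r t ^ 2) :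
    C * √(Y t) ≤ r t := by
  refine (sq_le_sq₀ (mul_nonneg h.C_pos.le (sqrt_nonneg _)) (h.pos t ht).le).1 ?_
  rwa [mul_pow, sq_sqrt (h.nonneg t ht)]

lemma half_pow_le_of_small {t : ℝ} (ht : t ∈ Ico t₁ T) (hs : C ^ 2 * Y t ≤ r t ^ 2) :
    r t ^ (p + 2) / 2 ≤ p * r' t := by
  have hr := h.pos t ht
  have hY := h.nonneg t ht
  have hCY : C * Y t ≤ r t ^ 2 / 2 := by nlinarith [h.two_le_C, mul_nonneg h.C_pos.le hY]
  have herr : C * r t ^ p * Y t ≤ r t ^ (p + 2) / 2 :=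
    calc C * r t ^ p * Y t = r t ^ p * (C * Y t) := by ring
      _ ≤ r t ^ p * (r t ^ 2 / 2) := by gcongr
      _ = r t ^ (p + 2) / 2 := by ring
  linarith [(abs_le.1 (h.mean_estimate t ht hs)).1]

lemma deriv_mean_pos_of_small {t : ℝ} (ht : t ∈ Ico t₁ T) (hs : C ^ 2 * Y t ≤ r t ^ 2) :
    0 < r' t :=
  pos_of_mul_pos_right ((half_pos (pow_pos (h.pos t ht) _)).trans_le (h.half_pow_le_of_small ht hs))
    h.p_pos.le

lemma deriv_energy_nonpos_of_small {t : ℝ} (ht : t ∈ Ico t₁ T) (hs : C ^ 2 * Y t ≤ r t ^ 2) :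
    Y' t ≤ 0 := by
  have hr := h.pos t ht
  have hrate : C * (√(Y t) / r t) ≤ 1 := by
    rw [← mul_div_assoc, div_le_one hr]
    exact h.mul_sqrt_le_of_small ht hs
  have hN : (1 : ℝ) ≤ N := by exact_mod_cast h.one_le_N
  refine nonpos_of_mul_nonpos_right ((h.energy_estimate t ht hs).trans ?_) h.p_pos
  exact mul_nonpos_of_nonneg_of_nonpos (by positivity)
    (mul_nonpos_of_nonpos_of_nonneg (by linarith) (h.nonneg t ht))

lemma small {t : ℝ} (ht : t ∈ Ico t₁ T) : C ^ 2 * Y t ≤ r t ^ 2 := by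
  have hsub : Icc t₁ t ⊆ Ico t₁ T := fun x hx => ⟨hx.1, hx.2.trans_lt ht.2⟩
  have hsub' : Ico t₁ t ⊆ Ico t₁ T := Ico_subset_Icc_self.trans hsub
  have hdY (x) (hx : x ∈ Ico t₁ T) := (h.hasDerivAt_energy x hx).const_mul (C ^ 2)
  have hdr (x) (hx : x ∈ Ico t₁ T) := (h.hasDerivAt_mean x hx).fun_pow 2
  refine image_le_of_deriv_right_lt_deriv_boundary' (f := fun t => C ^ 2 * Y t)
    (B := fun t => r t ^ 2) (fun x hx => (hdY x (hsub hx)).continuousAt.continuousWithinAt)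
    (fun x hx => (hdY x (hsub' hx)).hasDerivWithinAt) h.small_init
    (fun x hx => (hdr x (hsub hx)).continuousAt.continuousWithinAt)
    (fun x hx => (hdr x (hsub' hx)).hasDerivWithinAt) (fun x hx hxe => ?_) ⟨ht.1, le_rfl⟩
  have hr := h.pos x (hsub' hx)
  have hr' := h.deriv_mean_pos_of_small (hsub' hx) hxe.le
  refine (mul_nonpos_of_nonneg_of_nonpos (sq_nonneg C)
    (h.deriv_energy_nonpos_of_small (hsub' hx) hxe.le)).trans_lt ?_
  simp only [Nat.cast_ofNat, Nat.add_one_sub_one, pow_one]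
  positivity

lemma energy_le_init {t : ℝ} (ht : t ∈ Ico t₁ T) : Y t ≤ Y t₁ :=
  antitoneOn_of_hasDerivWithinAt_nonpos (convex_Ico t₁ T)
    (fun x hx => (h.hasDerivAt_energy x hx).continuousAt.continuousWithinAt)
    (fun x hx => (h.hasDerivAt_energy x (interior_subset hx)).hasDerivWithinAt)
    (fun _ hx => h.deriv_energy_nonpos_of_small (interior_subset hx) (h.small (interior_subset hx)))
    (left_mem_Ico.2 h.lt) ht ht.1

lemma deriv_weighted_energy_le {t : ℝ} (ht : t ∈ Ico t₁ T) :
    Y' t + N * Y t * (r' t / r t) - 2 * (N + C) * √(Y t₁) * Y t * (r' t / r t ^ 2) ≤ 0 := by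
  have hr := h.pos t ht
  have hY := h.nonneg t ht
  have hC := h.C_pos
  have hs := h.small ht
  have hp := h.p_pos
  have hsqrt : √(Y t) ≤ √(Y t₁) := sqrt_le_sqrt (h.energy_le_init ht)
  have hmean : p * (r' t / r t) ≤ r t ^ p * (r t + √(Y t)) := by
    rw [← mul_div_assoc, div_le_iff₀ hr]
    have herr : C * Y t ≤ √(Y t) * r t := by
      nlinarith [h.mul_sqrt_le_of_small ht hs, sq_sqrt hY, sqrt_nonneg (Y t)]
    calc p * r' t ≤ r t ^ (p + 2) + r t ^ p * (C * Y t) := by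
          linarith [(abs_le.1 (h.mean_estimate t ht hs)).2]
      _ ≤ r t ^ (p + 2) + r t ^ p * (√(Y t) * r t) := by gcongr
      _ = r t ^ p * (r t + √(Y t)) * r t := by ring
  have hgrowth : r t ^ p / 2 ≤ p * (r' t / r t ^ 2) := by
    rw [← mul_div_assoc, le_div_iff₀ (by positivity)]
    calc r t ^ p / 2 * r t ^ 2 = r t ^ (p + 2) / 2 := by ring
      _ ≤ p * r' t := h.half_pow_le_of_small ht hs
  have henergy : p * Y' t ≤ r t ^ p * (-N * r t + C * √(Y t)) * Y t := by
    refine (h.energy_estimate t ht hs).trans_eq ?_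
    field_simp
    ring
  refine nonpos_of_mul_nonpos_right ?_ hp
  calc p * (Y' t + N * Y t * (r' t / r t) - 2 * (N + C) * √(Y t₁) * Y t * (r' t / r t ^ 2))
      = p * Y' t + N * Y t * (p * (r' t / r t)) -
          2 * (N + C) * √(Y t₁) * Y t * (p * (r' t / r t ^ 2)) := by ring
    _ ≤ r t ^ p * (-N * r t + C * √(Y t)) * Y t + N * Y t * (r t ^ p * (r t + √(Y t))) -
          2 * (N + C) * √(Y t₁) * Y t * (r t ^ p / 2) := by gcongr
    _ = (N + C) * r t ^ p * Y t * (√(Y t) - √(Y t₁)) := by ring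
    _ ≤ 0 := mul_nonpos_of_nonneg_of_nonpos (by positivity) (by linarith)

/- The factor `exp (K / r)` absorbs the error terms of `Y r ^ N`; it is at least `1`. -/
lemma exists_energy_mul_pow_le : ∃ M, 0 ≤ M ∧ ∀ t ∈ Ico t₁ T, Y t * r t ^ N ≤ M := by
  set K := 2 * (N + C) * √(Y t₁)
  have hC := h.C_pos
  have ht₁ := left_mem_Ico.2 h.lt
  have hder (t) (ht : t ∈ Ico t₁ T) : HasDerivAt (fun t => Y t * r t ^ N * exp (K * (r t)⁻¹))
      ((r t ^ N * exp (K * (r t)⁻¹)) *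
        (Y' t + N * Y t * (r' t / r t) - K * Y t * (r' t / r t ^ 2))) t := by
    have hr := (h.pos t ht).ne'
    refine (((h.hasDerivAt_energy t ht).mul ((h.hasDerivAt_mean t ht).pow N)).mul
      (((h.hasDerivAt_mean t ht).fun_inv hr).const_mul K).exp).congr_deriv ?_
    obtain ⟨n, hn⟩ := Nat.exists_eq_add_of_le' h.one_le_N
    simp only [hn, Nat.add_sub_cancel, Pi.pow_apply, Pi.mul_apply]
    field_simp
    ring
  have hanti : AntitoneOn (fun t => Y t * r t ^ N * exp (K * (r t)⁻¹)) (Ico t₁ T) :=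
    antitoneOn_of_hasDerivWithinAt_nonpos (convex_Ico t₁ T)
      (fun t ht => (hder t ht).continuousAt.continuousWithinAt)
      (fun t ht => (hder t (interior_subset ht)).hasDerivWithinAt) fun t ht => by
        have hr := h.pos t (interior_subset ht)
        exact mul_nonpos_of_nonneg_of_nonpos (by positivity)
          (h.deriv_weighted_energy_le (interior_subset ht))
  refine ⟨_, ?_, fun t ht => le_trans ?_ (hanti ht₁ ht ht.1)⟩
  · have hr := h.pos t₁ ht₁
    have hY := h.nonneg t₁ ht₁
    positivity
  · have hr := h.pos t ht
    have hY := h.nonneg t ht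
    exact le_mul_of_one_le_right (by positivity) (one_le_exp (by positivity))

lemma hasDerivAt_inv_pow {t : ℝ} (ht : t ∈ Ico t₁ T) :
    HasDerivAt (fun t => (r t ^ (p + 1))⁻¹) (-((p + 1) * (r' t / r t ^ (p + 2)))) t := by
  have hr := h.pos t ht
  refine (((h.hasDerivAt_mean t ht).fun_pow (p + 1)).fun_inv (pow_ne_zero _ hr.ne')).congr_deriv ?_
  simp only [Nat.add_sub_cancel]
  push_cast
  field_simp
  ring

lemma abs_deriv_inv_pow_add_le {t : ℝ} (ht : t ∈ Ico t₁ T) :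
    |-((p + 1) * (r' t / r t ^ (p + 2))) + (p + 1) / p| ≤ (p + 1) / p * (C * (Y t / r t ^ 2)) := by
  have hr := h.pos t ht
  have hp := h.p_pos
  have heq : -((p + 1) * (r' t / r t ^ (p + 2))) + (p + 1) / p =
      -((p + 1) / p * ((p * r' t - r t ^ (p + 2)) / r t ^ (p + 2))) := by
    field_simp
    ring
  rw [heq, abs_neg, abs_mul, abs_of_pos (by positivity : 0 < ((p : ℝ) + 1) / p), abs_div,
    abs_of_pos (pow_pos hr (p + 2))]
  gcongr
  rw [div_le_iff₀ (by positivity)]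
  refine (h.mean_estimate t ht (h.small ht)).trans_eq ?_
  field_simp
  ring

variable (hblow : Tendsto r (𝓝[<] T) atTop)
include hblow

lemma abs_inv_pow_sub_le_of_forall {t B : ℝ} (ht : t ∈ Ico t₁ T)
    (hB : ∀ s ∈ Ico t T, C * (Y s / r s ^ 2) ≤ B) :
    |p / (p + 1) * (r t ^ (p + 1))⁻¹ - (T - t)| ≤ B * (T - t) := by
  have hp := h.p_pos
  have hsub (s) (hs : s ∈ Ico t T) : s ∈ Ico t₁ T := ⟨ht.1.trans hs.1, hs.2⟩
  have hlim : Tendsto (fun t => (r t ^ (p + 1))⁻¹) (𝓝[<] T) (𝓝 0) :=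
    ((tendsto_pow_atTop p.succ_ne_zero).comp hblow).inv_tendsto_atTop
  have hmvt := abs_sub_mul_le_of_tendsto_zero (B := (p + 1) / p * B) ht.2
    (fun s hs => h.hasDerivAt_inv_pow (hsub s hs))
    (fun s hs => (h.abs_deriv_inv_pow_add_le (hsub s hs)).trans (by gcongr; exact hB s hs)) hlim
  have hscale : p / (p + 1) * (r t ^ (p + 1))⁻¹ - (T - t) =
      p / (p + 1) * ((r t ^ (p + 1))⁻¹ - (p + 1) / p * (T - t)) := by
    field_simp
  rw [hscale, abs_mul, abs_of_pos (by positivity : 0 < (p : ℝ) / (p + 1))]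
  refine (mul_le_mul_of_nonneg_left hmvt (by positivity)).trans_eq ?_
  field_simp

lemma inv_pow_le {t : ℝ} (ht : t ∈ Ico t₁ T) :
    (r t ^ (p + 1))⁻¹ ≤ 2 * ((p + 1) / p) * (T - t) := by
  have hp := h.p_pos
  have hB : ∀ s ∈ Ico t T, C * (Y s / r s ^ 2) ≤ 1 := fun s hs => by
    have hs' : s ∈ Ico t₁ T := ⟨ht.1.trans hs.1, hs.2⟩
    have hr := h.pos s hs'
    rw [← mul_div_assoc, div_le_one (by positivity)]
    nlinarith [h.small hs', h.two_le_C, mul_nonneg h.C_pos.le (h.nonneg s hs')]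
  have hle := (abs_le.1 (h.abs_inv_pow_sub_le_of_forall hblow ht hB)).2
  calc (r t ^ (p + 1))⁻¹ = (p + 1) / p * (p / (p + 1) * (r t ^ (p + 1))⁻¹) := by field_simp
    _ ≤ (p + 1) / p * (2 * (T - t)) :=
        mul_le_mul_of_nonneg_left (by linarith) (by positivity)
    _ = 2 * ((p + 1) / p) * (T - t) := by ring

lemma exists_energy_div_sq_le : ∃ A, 0 ≤ A ∧ ∀ t ∈ Ico t₁ T,
    C * (Y t / r t ^ 2) ≤ A * (T - t) ^ ((N + 2 : ℝ) / (p + 1)) := by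
  obtain ⟨M, hM0, hM⟩ := h.exists_energy_mul_pow_le
  have hp := h.p_pos
  have hC := h.C_pos
  set β : ℝ := (N + 2) / (p + 1) with hβ
  refine ⟨C * (M * (2 * ((p + 1) / p)) ^ β), by positivity, fun t ht => ?_⟩
  have hr := h.pos t ht
  have hTt : 0 ≤ T - t := sub_nonneg.2 ht.2.le
  have hrpow : (r t ^ (N + 2))⁻¹ = ((r t ^ (p + 1))⁻¹) ^ β := by
    rw [inv_rpow (by positivity), ← rpow_natCast, ← rpow_natCast, ← rpow_mul hr.le, hβ]
    push_cast
    field_simp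
  calc C * (Y t / r t ^ 2) = C * (Y t * r t ^ N * (r t ^ (N + 2))⁻¹) := by
        field_simp
        ring
    _ ≤ C * (M * ((r t ^ (p + 1))⁻¹) ^ β) := by
        rw [hrpow]
        gcongr
        exact hM t ht
    _ ≤ C * (M * (2 * ((p + 1) / p) * (T - t)) ^ β) := by
        gcongr
        exact h.inv_pow_le hblow ht
    _ = C * (M * (2 * ((p + 1) / p)) ^ β) * (T - t) ^ β := by
        rw [mul_rpow (by positivity) hTt]
        ring

theorem exists_abs_inv_pow_sub_le : ∃ a > 0, ∀ t ∈ Ico t₁ T,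
    |p / (p + 1) * (r t ^ (p + 1))⁻¹ - (T - t)| ≤
      a * (T - t) ^ (1 + (N + 2 : ℝ) / (p + 1)) := by
  obtain ⟨A, hA0, hA⟩ := h.exists_energy_div_sq_le hblow
  refine ⟨A + 1, by positivity, fun t ht => ?_⟩
  have hTt : 0 < T - t := sub_pos.2 ht.2
  have hmain := h.abs_inv_pow_sub_le_of_forall hblow ht
    (B := A * (T - t) ^ ((N + 2 : ℝ) / (p + 1))) fun s hs => by
      refine (hA s ⟨ht.1.trans hs.1, hs.2⟩).trans ?_
      have := sub_nonneg.2 hs.2.le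
      gcongr
      exact hs.1
  rw [rpow_add hTt, rpow_one]
  calc _ ≤ A * ((T - t) * (T - t) ^ ((N + 2 : ℝ) / (p + 1))) := hmain.trans_eq (by ring)
    _ ≤ _ := by gcongr; linarith

end IsMeanEnergySystem

lemma eventually_mul_rpow_one_add_lt {β : ℝ} (hβ : 0 < β) (a T : ℝ) :
    ∀ᶠ t in 𝓝[<] T, a * (T - t) ^ (1 + β) < T - t := by
  have hlim : Tendsto (fun t => a * (T - t) ^ β) (𝓝[<] T) (𝓝 0) := by
    have hcont : Continuous fun t => a * (T - t) ^ β :=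
      continuous_const.mul ((continuous_rpow_const hβ.le).comp (continuous_sub_left T))
    simpa [hβ.ne'] using (hcont.tendsto T).mono_left nhdsWithin_le_nhds
  filter_upwards [hlim.eventually_lt_const one_pos, self_mem_nhdsWithin] with t hsmall ht
  have hTt : 0 < T - t := sub_pos.2 ht
  rw [rpow_add hTt, rpow_one]
  nlinarith

lemma rpow_mul_eq_rpow_neg {p : ℕ} (hp : 1 ≤ p) {r : ℝ} (hr : 0 < r) :
    (((p : ℝ) + 1) / p) ^ ((1 : ℝ) / (p + 1)) * r =
      (p / (p + 1) * (r ^ (p + 1))⁻¹) ^ (-((1 : ℝ) / (p + 1))) := by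
  have : (0 : ℝ) < p := by exact_mod_cast hp
  have hroot : (r ^ (p + 1)) ^ ((1 : ℝ) / (p + 1)) = r := by
    rw [one_div]
    exact_mod_cast pow_rpow_inv_natCast hr.le p.succ_ne_zero
  rw [rpow_neg (by positivity), ← inv_rpow (by positivity), mul_inv, inv_inv, inv_div,
    mul_rpow (by positivity) (by positivity), hroot]

lemma rpow_bounds_of_abs_sub_le {p : ℕ} (hp : 1 ≤ p) {r τ e : ℝ} (hr : 0 < r) (heτ : e < τ)
    (h : |p / (p + 1) * (r ^ (p + 1))⁻¹ - τ| ≤ e) :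
    (((p : ℝ) + 1) / p) ^ ((1 : ℝ) / (p + 1)) * r ≤ (τ - e) ^ (-((1 : ℝ) / (p + 1))) ∧
      (τ + e) ^ (-((1 : ℝ) / (p + 1))) ≤ (((p : ℝ) + 1) / p) ^ ((1 : ℝ) / (p + 1)) * r := by
  have : (0 : ℝ) < p := by exact_mod_cast hp
  have hexp : -((1 : ℝ) / (p + 1)) ≤ 0 := neg_nonpos.2 (by positivity)
  obtain ⟨hlower, hupper⟩ := abs_le.1 h
  rw [rpow_mul_eq_rpow_neg hp hr]
  exact ⟨rpow_le_rpow_of_nonpos (sub_pos.2 heτ) (by linarith) hexp,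
    rpow_le_rpow_of_nonpos (by positivity) (by linarith) hexp⟩

end BlowUpRate

section ParameterDependence

open scoped ContDiff

variable {F : ℝ → ℝ → ℝ} {I : Set ℝ} {n : ℕ∞ω} {θ t : ℝ}

lemma contDiff_slice (hF : ContDiffOn ℝ n (fun q : ℝ × ℝ => F q.1 q.2) (univ ×ˢ I)) (ht : t ∈ I) :
    ContDiff ℝ n fun θ => F θ t :=
  contDiffOn_univ.1 (hF.comp (f := fun θ : ℝ => (θ, t)) (by fun_prop) fun _ _ => ⟨trivial, ht⟩)

lemma contDiffOn_deriv_slice (hI : UniqueDiffOn ℝ I)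
    (hF : ContDiffOn ℝ ∞ (fun q : ℝ × ℝ => F q.1 q.2) (univ ×ˢ I)) :
    ContDiffOn ℝ ∞ (fun q : ℝ × ℝ => deriv (fun θ => F θ q.2) q.1) (univ ×ˢ I) := by
  have huniq : UniqueDiffOn ℝ ((univ : Set ℝ) ×ˢ I) := uniqueDiffOn_univ.prod hI
  refine ((hF.fderivWithin huniq le_rfl).clm_apply
    (contDiffOn_const (c := ((1 : ℝ), (0 : ℝ))))).congr fun q hq => ?_
  have hslice : HasDerivWithinAt (fun θ : ℝ => (θ, q.2)) (1, 0) univ q.1 :=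
    ((hasDerivAt_id q.1).prodMk (hasDerivAt_const q.1 q.2)).hasDerivWithinAt
  have hmaps : MapsTo (fun θ : ℝ => (θ, q.2)) univ (univ ×ˢ I) := fun θ _ => ⟨trivial, hq.2⟩
  exact (hasDerivWithinAt_univ.1 (((hF q hq).differentiableWithinAt
    (by simp)).hasFDerivWithinAt.comp_hasDerivWithinAt q.1 hslice hmaps)).deriv

section PartialDerivatives

variable {E : Type*} [NormedAddCommGroup E] [NormedSpace ℝ E] {U : ℝ × ℝ → E}
  {U' : ℝ × ℝ →L[ℝ] E}

lemma hasDerivAt_slice_fst (hU : HasFDerivAt U U' (θ, t)) :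
    HasDerivAt (fun x => U (x, t)) (U' (1, 0)) θ :=
  hU.comp_hasDerivAt (f := fun x => (x, t)) θ ((hasDerivAt_id θ).prodMk (hasDerivAt_const θ t))

lemma hasDerivAt_slice_snd (hU : HasFDerivAt U U' (θ, t)) :
    HasDerivAt (fun s => U (θ, s)) (U' (0, 1)) t :=
  hU.comp_hasDerivAt (f := fun s => (θ, s)) t ((hasDerivAt_const t θ).prodMk (hasDerivAt_id t))

end PartialDerivatives

lemma hasDerivAt_deriv_comm (hF : ContDiffAt ℝ 2 (fun q : ℝ × ℝ => F q.1 q.2) (θ, t)) :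
    HasDerivAt (fun s => deriv (fun x => F x s) θ) (deriv (fun x => deriv (F x) t) θ) t := by
  set U : ℝ × ℝ → ℝ := fun q => F q.1 q.2
  have hdiff : ∀ᶠ q in 𝓝 (θ, t), DifferentiableAt ℝ U q :=
    (hF.eventually (by simp)).mono fun q hq => hq.differentiableAt two_ne_zero
  have hU' (v : ℝ × ℝ) : HasFDerivAt (fun q => fderiv ℝ U q v)
      ((fderiv ℝ (fderiv ℝ U) (θ, t)).flip v) (θ, t) :=
    ((hF.fderiv_right (m := 1) le_rfl).differentiableAt one_ne_zero).hasFDerivAt.clm_apply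
      (hasFDerivAt_const v _) |>.congr_fderiv (by ext <;> simp)
  have htime : HasDerivAt (fun s => deriv (fun x => F x s) θ)
      (fderiv ℝ (fderiv ℝ U) (θ, t) (0, 1) (1, 0)) t := by
    refine (hasDerivAt_slice_snd (hU' (1, 0))).congr_of_eventuallyEq ?_
    filter_upwards [(Continuous.prodMk_right θ).continuousAt.eventually hdiff] with s hs
    exact (hasDerivAt_slice_fst hs.hasFDerivAt).deriv
  have hspace : HasDerivAt (fun x => deriv (F x) t)
      (fderiv ℝ (fderiv ℝ U) (θ, t) (1, 0) (0, 1)) θ := by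
    refine (hasDerivAt_slice_fst (hU' (0, 1))).congr_of_eventuallyEq ?_
    filter_upwards [(Continuous.prodMk_left t).continuousAt.eventually hdiff] with x hx
    exact (hasDerivAt_slice_snd hx.hasFDerivAt).deriv
  rw [hspace.deriv, ← (hF.isSymmSndFDerivAt (by simp)).eq]
  exact htime

lemma continuousOn_integral_uniformAngle
    (hF : ContinuousOn (fun q : ℝ × ℝ => F q.1 q.2) (univ ×ˢ I)) :
    ContinuousOn (fun s => ∫ θ, F θ s ∂uniformAngle) I := by
  have hint : ContinuousOn (fun s => ∫ θ in (0 : ℝ)..(2 * π), F θ s) I := by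
    rw [continuousOn_iff_continuous_domRestrict]
    refine intervalIntegral.continuous_parametric_intervalIntegral_of_continuous'
      (f := fun (s : I) θ => F θ s) ?_ 0 (2 * π)
    exact hF.comp_continuous (f := fun q : I × ℝ => (q.2, (q.1 : ℝ))) (by fun_prop)
      fun q => ⟨trivial, q.1.2⟩
  simp only [integral_uniformAngle]
  exact hint.const_smul (2 * π)⁻¹

lemma hasDerivAt_integral_uniformAngle {F' : ℝ → ℝ → ℝ} (hI : I ∈ 𝓝 t)
    (hF : ∀ s ∈ I, Continuous fun θ => F θ s)
    (hF' : ContinuousOn (fun q : ℝ × ℝ => F' q.1 q.2) (univ ×ˢ I))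
    (hderiv : ∀ θ, ∀ s ∈ I, HasDerivAt (F θ) (F' θ s) s) :
    HasDerivAt (fun s => ∫ θ, F θ s ∂uniformAngle) (∫ θ, F' θ t ∂uniformAngle) t := by
  obtain ⟨J, hJ, hJI, hJc⟩ := local_compact_nhds hI
  have ht : t ∈ I := mem_of_mem_nhds hI
  obtain ⟨B, hB⟩ := (isCompact_Icc (a := (0 : ℝ)) (b := 2 * π)).prod hJc
    |>.exists_bound_of_continuousOn (hF'.mono (prod_mono (subset_univ _) hJI))
  refine (hasDerivAt_integral_of_dominated_loc_of_deriv_le (bound := fun _ => B)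
    (F := fun s θ => F θ s) (F' := fun s θ => F' θ s) hJ
    (eventually_of_mem hI fun s hs => (hF s hs).aestronglyMeasurable)
    (integrable_uniformAngle_of_continuous (hF t ht))
    (hF'.comp_continuous (f := fun θ : ℝ => (θ, t)) (by fun_prop)
      fun _ => ⟨trivial, ht⟩).aestronglyMeasurable ?_ (integrable_const B)
    (Eventually.of_forall fun θ s hs => hderiv θ s (hJI hs))).2
  filter_upwards [ae_uniformAngle_mem_Ioc] with θ hθ s hs
  exact hB (θ, s) ⟨Ioc_subset_Icc_self hθ, hs⟩

end ParameterDependence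

section Flow

open scoped ContDiff

lemma contDiff_pcsfSpeed {k : ℝ → ℝ} (hk : ContDiff ℝ ∞ k) (p : ℕ) :
    ContDiff ℝ ∞ (pcsfSpeed p k) := by
  have : ContDiff ℝ ∞ (deriv k) := hk.iterate_deriv 1
  have : ContDiff ℝ ∞ (deriv (deriv k)) := hk.iterate_deriv 2
  unfold pcsfSpeed
  fun_prop

lemma periodic_pcsfSpeed {k : ℝ → ℝ} {c : ℝ} (hper : Function.Periodic k c) (p : ℕ) :
    Function.Periodic (pcsfSpeed p k) c := fun θ => by
  simp only [pcsfSpeed, hper θ, periodic_deriv hper θ, periodic_deriv (periodic_deriv hper) θ]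

lemma contDiffOn_pcsfSpeed_slice {k : ℝ → ℝ → ℝ} {I : Set ℝ} (hI : UniqueDiffOn ℝ I)
    (hk : ContDiffOn ℝ ∞ (fun q : ℝ × ℝ => k q.1 q.2) (univ ×ˢ I)) (p : ℕ) :
    ContDiffOn ℝ ∞ (fun q : ℝ × ℝ => pcsfSpeed p (fun θ => k θ q.2) q.1) (univ ×ˢ I) := by
  have hk' := contDiffOn_deriv_slice hI hk
  have hk'' := contDiffOn_deriv_slice (F := fun θ t => deriv (fun x => k x t) θ) hI hk'
  unfold pcsfSpeed
  fun_prop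

namespace IsPCSF

variable {p : ℕ} {T : ℝ} {k : ℝ → ℝ → ℝ} {ψ : ℝ → ℝ} {t : ℝ} (h : IsPCSF p T k ψ)
include h

lemma contDiffOn : ContDiffOn ℝ ∞ (fun q : ℝ × ℝ => k q.1 q.2) (univ ×ˢ Ico 0 T) := h.1

lemma contDiff (ht : t ∈ Ico 0 T) : ContDiff ℝ ∞ fun θ => k θ t :=
  contDiff_slice h.contDiffOn ht

lemma contDiff_two (ht : t ∈ Ico 0 T) : ContDiff ℝ 2 fun θ => k θ t :=
  contDiff_infty.1 (h.contDiff ht) 2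

lemma periodic (t : ℝ) : Function.Periodic (fun θ => k θ t) (2 * π) := fun θ => h.2.1 θ t

lemma hasDerivAt (θ : ℝ) (ht : t ∈ Ico 0 T) :
    HasDerivAt (k θ) (pcsfSpeed p (fun x => k x t) θ) t := h.2.2.2.1 θ t ht

lemma initial_eq : (fun θ => k θ 0) = ψ := funext h.2.2.2.2.1

lemma tendsto_iSup_atTop :
    Tendsto (fun t => ⨆ θ : Icc (0 : ℝ) (2 * π), k θ t) (𝓝[<] T) atTop :=
  h.2.2.2.2.2.2.2.2.1

lemma fCoeff_inv_one_eq_zero (ht : t ∈ Ico 0 T) : fCoeff (fun θ => (k θ t)⁻¹) 1 = 0 :=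
  fCoeff_inv_one_eq_zero_of_closed (h.2.2.2.2.2.2.2.2.2 t ht)

lemma mean_pos (ht : t ∈ Ico 0 T) : 0 < ∫ θ, k θ t ∂uniformAngle :=
  integral_uniformAngle_pos (h.contDiff ht).continuous fun θ => h.2.2.1 θ t ht

lemma hasDerivAt_mean (ht : t ∈ Ioo 0 T) : HasDerivAt (fun t => ∫ θ, k θ t ∂uniformAngle)
    (∫ θ, pcsfSpeed p (fun x => k x t) θ ∂uniformAngle) t :=
  hasDerivAt_integral_uniformAngle (Ico_mem_nhds ht.1 ht.2)
    (fun _ hs => (h.contDiff hs).continuous)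
    (contDiffOn_pcsfSpeed_slice (uniqueDiffOn_Ico 0 T) h.contDiffOn p).continuousOn
    fun θ _ hs => h.hasDerivAt θ hs

lemma hasDerivAt_deriv (θ : ℝ) (ht : t ∈ Ioo 0 T) : HasDerivAt (fun s => deriv (fun x => k x s) θ)
    (deriv (pcsfSpeed p fun x => k x t) θ) t := by
  have hspeed : (fun x => deriv (k x) t) = pcsfSpeed p fun x => k x t :=
    funext fun x => (h.hasDerivAt x (Ioo_subset_Ico_self ht)).deriv
  rw [← hspeed]
  exact hasDerivAt_deriv_comm ((h.contDiffOn.contDiffAt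
    (prod_mem_nhds univ_mem (Ico_mem_nhds ht.1 ht.2))).of_le (WithTop.coe_le_coe.2 le_top))

lemma integral_deriv_deriv_mul_speed (ht : t ∈ Ico 0 T) :
    ∫ θ, deriv (deriv fun x => k x t) θ * pcsfSpeed p (fun x => k x t) θ ∂uniformAngle =
      -∫ θ, deriv (fun x => k x t) θ * deriv (pcsfSpeed p fun x => k x t) θ ∂uniformAngle :=
  integral_deriv_mul (((h.contDiff ht).iterate_deriv 1).of_le (by simp))
    ((contDiff_pcsfSpeed (h.contDiff ht) p).of_le (by simp)) (periodic_deriv (h.periodic t))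
    (periodic_pcsfSpeed (h.periodic t) p)

lemma hasDerivAt_integral_sq_deriv (ht : t ∈ Ioo 0 T) :
    HasDerivAt (fun t => ∫ θ, deriv (fun x => k x t) θ ^ 2 ∂uniformAngle)
      (-2 * ∫ θ, deriv (deriv fun x => k x t) θ * pcsfSpeed p (fun x => k x t) θ ∂uniformAngle)
      t := by
  rw [h.integral_deriv_deriv_mul_speed (Ioo_subset_Ico_self ht), neg_mul_neg,
    ← integral_const_mul]
  have hI := uniqueDiffOn_Ico 0 T
  have hk' := contDiffOn_deriv_slice hI h.contDiffOn
  have hv' := contDiffOn_deriv_slice (F := fun θ t => pcsfSpeed p (fun x => k x t) θ) hI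
    (contDiffOn_pcsfSpeed_slice hI h.contDiffOn p)
  have hsub : (univ : Set ℝ) ×ˢ Ioo 0 T ⊆ univ ×ˢ Ico 0 T :=
    prod_mono subset_rfl Ioo_subset_Ico_self
  refine hasDerivAt_integral_uniformAngle (F := fun θ t => deriv (fun x => k x t) θ ^ 2)
    (F' := fun θ t => 2 * (deriv (fun x => k x t) θ * deriv (pcsfSpeed p fun x => k x t) θ))
    (Ioo_mem_nhds ht.1 ht.2)
    (fun s hs => ((h.contDiff (Ioo_subset_Ico_self hs)).continuous_deriv (by simp)).pow 2)
    ((continuousOn_const.mul (hk'.continuousOn.mul hv'.continuousOn)).mono hsub) fun θ s hs => ?_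
  exact ((h.hasDerivAt_deriv θ hs).fun_pow 2).congr_deriv (by simp [mul_assoc])

lemma exists_mul_oscBound_le {C : ℝ} (hT : 0 < T)
    (hψ : C * oscBound ψ < ∫ θ, ψ θ ∂uniformAngle) :
    ∃ t ∈ Ioo 0 T, C * oscBound (fun θ => k θ t) ≤ ∫ θ, k θ t ∂uniformAngle := by
  have hmean := continuousOn_integral_uniformAngle h.contDiffOn.continuousOn
  have hosc : ContinuousOn (fun t => C * oscBound fun θ => k θ t) (Ico 0 T) :=
    continuousOn_const.mul (continuousOn_const.mul (continuousOn_integral_uniformAngle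
      (F := fun θ t => deriv (fun x => k x t) θ ^ 2)
      ((contDiffOn_deriv_slice (uniqueDiffOn_Ico 0 T) h.contDiffOn).pow 2).continuousOn).sqrt)
  have h0 : (0 : ℝ) ∈ Ico 0 T := left_mem_Ico.2 hT
  rw [← h.initial_eq] at hψ
  have := left_nhdsWithin_Ioo_neBot hT
  have hlt : ∀ᶠ t in 𝓝[Ioo 0 T] 0, C * oscBound (fun θ => k θ t) < ∫ θ, k θ t ∂uniformAngle :=
    ((hosc 0 h0).mono Ioo_subset_Ico_self).eventually_lt
      ((hmean 0 h0).mono Ioo_subset_Ico_self) hψ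
  obtain ⟨t, hle, ht⟩ := (hlt.and self_mem_nhdsWithin).exists
  exact ⟨t, ht, hle.le⟩

variable {C t₁ : ℝ} (hest : HasNearlyCircularEstimates p C)
include hest

lemma le_two_mul_mean_of_small (ht : t ∈ Ico 0 T)
    (hs : C * oscBound (fun θ => k θ t) ≤ ∫ θ, k θ t ∂uniformAngle) (θ : ℝ) :
    k θ t ≤ 2 * ∫ θ, k θ t ∂uniformAngle :=
  (hest _ _ (h.contDiff_two ht) (h.periodic t) (h.fCoeff_inv_one_eq_zero ht) (h.mean_pos ht) rfl
    hs).1 θ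

variable (hp : 1 ≤ p) (hC : 2 ≤ C)
include hp hC

section SmallAt

variable (ht₁ : t₁ ∈ Ioo 0 T)
  (hs : C * oscBound (fun θ => k θ t₁) ≤ ∫ θ, k θ t₁ ∂uniformAngle)
include ht₁ hs

lemma isMeanEnergySystem : IsMeanEnergySystem p (6 * p - 4) C t₁ T
    (fun t => ∫ θ, k θ t ∂uniformAngle)
    (fun t => ∫ θ, pcsfSpeed p (fun x => k x t) θ ∂uniformAngle)
    (fun t => oscBound (fun θ => k θ t) ^ 2)
    (fun t => 4 * π ^ 2 * (-2 * ∫ θ, deriv (deriv fun x => k x t) θ *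
      pcsfSpeed p (fun x => k x t) θ ∂uniformAngle)) := by
  have hIoo (t) (ht : t ∈ Ico t₁ T) : t ∈ Ioo 0 T := ⟨ht₁.1.trans_le ht.1, ht.2⟩
  have hIco (t) (ht : t ∈ Ico t₁ T) : t ∈ Ico 0 T := Ioo_subset_Ico_self (hIoo t ht)
  have hN : ((6 * p - 4 : ℕ) : ℝ) = 6 * p - 4 := by
    rw [Nat.cast_sub (by omega)]
    push_cast
    ring
  have hsmall (t) (ht : t ∈ Ico t₁ T)
      (hst : C ^ 2 * oscBound (fun θ => k θ t) ^ 2 ≤ (∫ θ, k θ t ∂uniformAngle) ^ 2) :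
      C * oscBound (fun θ => k θ t) ≤ ∫ θ, k θ t ∂uniformAngle :=
    (sq_le_sq₀ (mul_nonneg (by linarith) (oscBound_nonneg _)) (h.mean_pos (hIco t ht)).le).1
      (by rwa [mul_pow])
  have hestimates (t) (ht : t ∈ Ico t₁ T)
      (hst : C ^ 2 * oscBound (fun θ => k θ t) ^ 2 ≤ (∫ θ, k θ t ∂uniformAngle) ^ 2) :=
    (hest _ _ (h.contDiff_two (hIco t ht)) (h.periodic t) (h.fCoeff_inv_one_eq_zero (hIco t ht))
      (h.mean_pos (hIco t ht)) rfl (hsmall t ht hst)).2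
  refine ⟨hp, by omega, hC, ht₁.2, fun t ht => h.mean_pos (hIco t ht), fun t _ => sq_nonneg _,
    fun t ht => h.hasDerivAt_mean (hIoo t ht), fun t ht => ?_,
    fun t ht hst => (hestimates t ht hst).1, fun t ht hst => ?_, ?_⟩
  · simp only [oscBound_sq]
    exact (h.hasDerivAt_integral_sq_deriv (hIoo t ht)).const_mul (4 * π ^ 2)
  · rw [hN, sqrt_sq (oscBound_nonneg _), mul_left_comm]
    refine (mul_le_mul_of_nonneg_left (hestimates t ht hst).2 (by positivity)).trans_eq ?_
    rw [oscBound_sq]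
    ring
  · rw [← mul_pow]
    exact pow_le_pow_left₀ (mul_nonneg (by linarith) (oscBound_nonneg _)) hs 2

lemma tendsto_mean_atTop : Tendsto (fun t => ∫ θ, k θ t ∂uniformAngle) (𝓝[<] T) atTop := by
  have hsys := h.isMeanEnergySystem hest hp hC ht₁ hs
  refine tendsto_atTop_mono' _ ?_ (h.tendsto_iSup_atTop.atTop_div_const two_pos)
  filter_upwards [Ico_mem_nhdsLT ht₁.2] with t ht
  have hsmall := hsys.mul_sqrt_le_of_small ht (hsys.small ht)
  rw [sqrt_sq (oscBound_nonneg _)] at hsmall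
  have : Nonempty (Icc (0 : ℝ) (2 * π)) := ⟨⟨0, le_rfl, two_pi_pos.le⟩⟩
  rw [div_le_iff₀' two_pos]
  exact ciSup_le fun θ => h.le_two_mul_mean_of_small hest ⟨ht₁.1.le.trans ht.1, ht.2⟩ hsmall θ

end SmallAt

theorem exists_abs_inv_pow_mean_sub_le (hT : 0 < T)
    (hψ : C * oscBound ψ < ∫ θ, ψ θ ∂uniformAngle) :
    ∃ t₁ ∈ Ioo 0 T, ∃ a > 0, ∀ t ∈ Ico t₁ T,
      |p / (p + 1) * ((∫ θ, k θ t ∂uniformAngle) ^ (p + 1))⁻¹ - (T - t)| ≤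
        a * (T - t) ^ (1 + (6 * (p : ℝ) - 2) / (p + 1)) := by
  obtain ⟨t₁, ht₁, hs⟩ := h.exists_mul_oscBound_le hT hψ
  have hN : ((6 * p - 4 : ℕ) : ℝ) + 2 = 6 * p - 2 := by
    rw [Nat.cast_sub (by omega)]
    push_cast
    ring
  rw [← hN]
  exact ⟨t₁, ht₁, (h.isMeanEnergySystem hest hp hC ht₁ hs).exists_abs_inv_pow_sub_le
    (h.tendsto_mean_atTop hest hp hC ht₁ hs)⟩

end IsPCSF

end Flow

/-- There is `c_p > 0` depending only on `p` such that if `ψ̂(0) ≥ c_p ‖ψ‖₂`,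
then there are `a₀, a₁ > 0` and `t₀ ∈ (0,T)` such that for all `t ∈ (t₀,T)`:
`((p+1)/p)^{1/(p+1)} k̂(0,t) ≤ [(T-t) - a₀(T-t)^{1+(6p-2)/(p+1)}]^{-1/(p+1)}` and
`((p+1)/p)^{1/(p+1)} k̂(0,t) ≥ [(T-t) + a₁(T-t)^{1+(6p-2)/(p+1)}]^{-1/(p+1)}`. -/
theorem statement14 (p : ℕ) (hp : 1 ≤ p) :
    ∃ cp > (0:ℝ), ∀ (T : ℝ), 0 < T → ∀ (k : ℝ → ℝ → ℝ) (ψ : ℝ → ℝ),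
      IsPCSF p T k ψ →
      cp * seminorm2 ψ ≤ (fCoeff ψ 0).re →
      ∃ a₀ > (0:ℝ), ∃ a₁ > (0:ℝ), ∃ t₀ : ℝ, 0 < t₀ ∧ t₀ < T ∧
        ∀ t : ℝ, t₀ < t → t < T →
          0 < (T - t) - a₀ * (T - t) ^ (1 + (6 * (p : ℝ) - 2) / ((p : ℝ) + 1)) ∧
          (((p : ℝ) + 1) / (p : ℝ)) ^ ((1 : ℝ) / ((p : ℝ) + 1))
              * (fCoeff (fun θ => k θ t) 0).re
            ≤ ((T - t) - a₀ * (T - t) ^ (1 + (6 * (p : ℝ) - 2) / ((p : ℝ) + 1)))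
                ^ (-((1 : ℝ) / ((p : ℝ) + 1))) ∧
          ((T - t) + a₁ * (T - t) ^ (1 + (6 * (p : ℝ) - 2) / ((p : ℝ) + 1)))
                ^ (-((1 : ℝ) / ((p : ℝ) + 1)))
            ≤ (((p : ℝ) + 1) / (p : ℝ)) ^ ((1 : ℝ) / ((p : ℝ) + 1))
              * (fCoeff (fun θ => k θ t) 0).re := by
  obtain ⟨C, hC, hest⟩ := exists_hasNearlyCircularEstimates hp
  have : 0 ≤ ∑' n : ℤ, 1 / (n : ℝ) ^ 2 := tsum_nonneg fun n => by positivity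
  refine ⟨C * (2 * π * √(2 * ∑' n : ℤ, 1 / (n : ℝ) ^ 2)) + 1, by positivity,
    fun T hT k ψ h hψ => ?_⟩
  simp only [fCoeff_zero_eq_integral, Complex.ofReal_re] at hψ ⊢
  have h0 : (0 : ℝ) ∈ Ico 0 T := left_mem_Ico.2 hT
  rw [← h.initial_eq] at hψ
  obtain ⟨t₁, ht₁, a, ha, hrate⟩ := h.exists_abs_inv_pow_mean_sub_le hest hp hC hT
    (by
      rw [← h.initial_eq]
      exact mul_oscBound_lt_of_mul_seminorm2_le (h.contDiff_two h0) (h.periodic 0) (by linarith)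
        (h.mean_pos h0) hψ)
  have hexp : 0 < (6 * (p : ℝ) - 2) / (p + 1) := by
    have : (1 : ℝ) ≤ p := by exact_mod_cast hp
    exact div_pos (by linarith) (by linarith)
  obtain ⟨t₀, ht₀, hsmall⟩ := (mem_nhdsLT_iff_exists_mem_Ico_Ioo_subset ht₁.2).1
    (eventually_mul_rpow_one_add_lt hexp a T)
  refine ⟨a, ha, a, ha, t₀, ht₁.1.trans_le ht₀.1, ht₀.2, fun t ht htT => ?_⟩
  exact ⟨sub_pos.2 (hsmall ⟨ht, htT⟩), rpow_bounds_of_abs_sub_le hp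
    (h.mean_pos ⟨(ht₁.1.trans_le ht₀.1).le.trans ht.le, htT⟩) (hsmall ⟨ht, htT⟩)
    (hrate t ⟨ht₀.1.trans ht.le, htT⟩)⟩
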